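/- arXiv:1509.07983 — 6 statements merged into one kernel-verified Lean document; each statement's English description precedes it below -/
import Mathlib

section
/- Let x_1,…,x_N ∈ ℝ^m be partitioned into k clusters of sizes n_1,…,n_k, and set X := Σ_{a=1}^k (1/n_a)·1_a 1_aᵀ. Then the following are equivalent: (a) X solves the k-means SDP; (b) every optimizer (z, α, β) of the dual program satisfies Q^{(a,a)}1 = 0 and β^{(a,a)} = 0 for every a ∈ {1,…,k}; (c) every optimizer (z, α, β) of the dual program satisfies α_{a,r} = −z/n_a + (1/n_a²)·1ᵀD^{(a,a)}1 − (2/n_a)·e_rᵀD^{(a,a)}1 for every cluster a and every index r in cluster a. -/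
open scoped BigOperators
open Matrix

namespace Stmt0

/-- Index type for `N` points partitioned into `k` clusters of sizes `n 0, …, n (k−1)`:
the pair `⟨a, i⟩` is the `i`-th point of cluster `a`. -/
abbrev Idx (k : ℕ) (n : Fin k → ℕ) := (a : Fin k) × Fin (n a)

variable {m k : ℕ} {n : Fin k → ℕ}

/-- The matrix of squared pairwise distances `D_{pq} = ‖x_p − x_q‖₂²`. -/
noncomputable def sqDist (x : Idx k n → EuclideanSpace ℝ (Fin m)) :
    Matrix (Idx k n) (Idx k n) ℝ :=
  fun p q => ‖x p - x q‖ ^ 2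

/-- Feasibility for the k-means SDP: `Tr X = k`, `X1 = 1`, `X ≥ 0` entrywise,
`X ⪰ 0`. -/
def SDPFeasible (X : Matrix (Idx k n) (Idx k n) ℝ) : Prop :=
  X.trace = (k : ℝ) ∧ X *ᵥ (fun _ => (1 : ℝ)) = (fun _ => (1 : ℝ)) ∧
    (∀ p q, 0 ≤ X p q) ∧ X.PosSemidef

/-- `X` solves the k-means SDP for the points `x`: it is feasible and attains the
minimum of `Tr(DX)` over the feasible region. -/
noncomputable def SolvesSDP (x : Idx k n → EuclideanSpace ℝ (Fin m))
    (X : Matrix (Idx k n) (Idx k n) ℝ) : Prop :=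
  SDPFeasible X ∧ ∀ Y : Matrix (Idx k n) (Idx k n) ℝ, SDPFeasible Y →
    (sqDist x * X).trace ≤ (sqDist x * Y).trace

/-- The matrix `Q = zI + (α1ᵀ + 1αᵀ)/2 − β/2 + D` appearing in the dual program. -/
noncomputable def dualQ (x : Idx k n → EuclideanSpace ℝ (Fin m)) (z : ℝ)
    (α : Idx k n → ℝ) (β : Matrix (Idx k n) (Idx k n) ℝ) :
    Matrix (Idx k n) (Idx k n) ℝ :=
  fun p q => z * (if p = q then 1 else 0) + (α p + α q) / 2 - β p q / 2 + sqDist x p q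

/-- Feasibility for the dual program: `β` symmetric with nonnegative entries and
`Q ⪰ 0`. -/
noncomputable def DualFeasible (x : Idx k n → EuclideanSpace ℝ (Fin m)) (z : ℝ)
    (α : Idx k n → ℝ) (β : Matrix (Idx k n) (Idx k n) ℝ) : Prop :=
  β.IsSymm ∧ (∀ p q, 0 ≤ β p q) ∧ (dualQ x z α β).PosSemidef

/-- The dual objective `kz + Σᵢ αᵢ`. -/
noncomputable def dualObj (z : ℝ) (α : Idx k n → ℝ) : ℝ := k * z + ∑ p, α p

/-- `(z, α, β)` is an optimizer of the dual program. -/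
noncomputable def DualOptimal (x : Idx k n → EuclideanSpace ℝ (Fin m)) (z : ℝ)
    (α : Idx k n → ℝ) (β : Matrix (Idx k n) (Idx k n) ℝ) : Prop :=
  DualFeasible x z α β ∧ ∀ z' α' β', DualFeasible x z' α' β' → dualObj z α ≤ dualObj z' α'

end Stmt0

open Stmt0

namespace KM
variable {m k : ℕ} {n : Fin k → ℕ}

section gen
variable {ι : Type*} [Fintype ι]

noncomputable def qf (M : Matrix ι ι ℝ) (v : ι → ℝ) : ℝ := ∑ p, ∑ q, v p * v q * M p q
noncomputable def ip (A B : Matrix ι ι ℝ) : ℝ := ∑ p, ∑ q, A p q * B p q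

lemma qf_add (A B : Matrix ι ι ℝ) (v : ι → ℝ) : qf (A + B) v = qf A v + qf B v := by
  simp [qf, mul_add, Finset.sum_add_distrib]
lemma qf_sub (A B : Matrix ι ι ℝ) (v : ι → ℝ) : qf (A - B) v = qf A v - qf B v := by
  simp [qf, mul_sub, Finset.sum_sub_distrib]
lemma qf_smul (c : ℝ) (A : Matrix ι ι ℝ) (v : ι → ℝ) : qf (c • A) v = c * qf A v := by
  simp only [qf, Finset.mul_sum, Matrix.smul_apply, smul_eq_mul]
  refine Finset.sum_congr rfl fun p _ => Finset.sum_congr rfl fun q _ => by ring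
lemma qf_transpose (A : Matrix ι ι ℝ) (v : ι → ℝ) : qf Aᵀ v = qf A v := by
  unfold qf
  rw [Finset.sum_comm]
  refine Finset.sum_congr rfl fun p _ => Finset.sum_congr rfl fun q _ => by
    simp only [Matrix.transpose_apply]; ring

lemma dot_eq_qf (M : Matrix ι ι ℝ) (v : ι → ℝ) : v ⬝ᵥ M *ᵥ v = qf M v := by
  simp only [qf, dotProduct, mulVec, Finset.mul_sum]
  refine Finset.sum_congr rfl fun p _ => Finset.sum_congr rfl fun q _ => by ring

lemma psd_iff (M : Matrix ι ι ℝ) :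
    M.PosSemidef ↔ (∀ p q, M p q = M q p) ∧ ∀ v, 0 ≤ qf M v := by
  rw [posSemidef_iff_dotProduct_mulVec]
  simp only [star_trivial, dot_eq_qf]
  refine and_congr_left fun _ => ?_
  rw [Matrix.IsHermitian, ← Matrix.ext_iff]
  simp only [conjTranspose_apply, star_trivial]
  exact ⟨fun h p q => (h p q).symm, fun h p q => (h p q).symm⟩

open scoped MatrixOrder in
lemma ip_nonneg [DecidableEq ι] {A B : Matrix ι ι ℝ} (hA : A.PosSemidef) (hB : B.PosSemidef) :
    0 ≤ ip A B := by
  obtain ⟨C, hC⟩ := CStarAlgebra.nonneg_iff_eq_star_mul_self.mp hB.nonneg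
  have : ip A B = ∑ r, qf A (fun p => C r p) := by
    rw [hC]
    simp only [ip, qf, Matrix.mul_apply, star_eq_conjTranspose, conjTranspose_apply, star_trivial,
      Finset.mul_sum]
    rw [Finset.sum_comm (f := fun r p => ∑ q, C r p * C r q * A p q)]
    refine Finset.sum_congr rfl fun p _ => ?_
    rw [Finset.sum_comm]
    refine Finset.sum_congr rfl fun p _ => Finset.sum_congr rfl fun q _ => by ring
  rw [this]
  exact Finset.sum_nonneg fun r _ => ((psd_iff A).1 hA).2 _

lemma trace_mul_eq_ip {A B : Matrix ι ι ℝ} (hB : ∀ p q, B p q = B q p) :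
    (A * B).trace = ip A B := by
  simp only [trace, diag, Matrix.mul_apply, ip]
  refine Finset.sum_congr rfl fun p _ => Finset.sum_congr rfl fun q _ => by rw [hB]

lemma qf_single_add [DecidableEq ι] (M : Matrix ι ι ℝ) (p q : ι) :
    qf M (Pi.single p 1 + Pi.single q 1) = M p p + M p q + M q p + M q q := by
  rw [← dot_eq_qf]
  simp [mulVec_add, add_dotProduct]; ring

lemma qf_single [DecidableEq ι] (M : Matrix ι ι ℝ) (p : ι) :
    qf M (Pi.single p 1) = M p p := by
  rw [← dot_eq_qf]
  simp

lemma qf_le (M : Matrix ι ι ℝ) (v : ι → ℝ) :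
    |qf M v| ≤ (∑ p, ∑ q, |M p q|) * ∑ r, v r ^ 2 := by
  unfold qf
  refine (Finset.abs_sum_le_sum_abs _ _).trans ?_
  rw [Finset.sum_mul]
  refine Finset.sum_le_sum fun p _ => (Finset.abs_sum_le_sum_abs _ _).trans ?_
  rw [Finset.sum_mul]
  refine Finset.sum_le_sum fun q _ => ?_
  rw [abs_mul, mul_comm]
  refine mul_le_mul_of_nonneg_left ?_ (abs_nonneg _)
  have h1 : v p ^ 2 ≤ ∑ r, v r ^ 2 :=
    Finset.single_le_sum (f := fun r => v r ^ 2) (fun _ _ => sq_nonneg _) (Finset.mem_univ p)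
  have h2 : v q ^ 2 ≤ ∑ r, v r ^ 2 :=
    Finset.single_le_sum (f := fun r => v r ^ 2) (fun _ _ => sq_nonneg _) (Finset.mem_univ q)
  rw [abs_le]
  constructor <;> nlinarith [sq_nonneg (v p - v q), sq_nonneg (v p + v q)]
end gen

lemma D_symm (x : Idx k n → EuclideanSpace ℝ (Fin m)) (p q) : sqDist x p q = sqDist x q p := by
  simp [sqDist, norm_sub_rev]
lemma D_nonneg (x : Idx k n → EuclideanSpace ℝ (Fin m)) (p q) : 0 ≤ sqDist x p q := by
  simp [sqDist]
lemma D_diag (x : Idx k n → EuclideanSpace ℝ (Fin m)) (p) : sqDist x p p = 0 := by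
  simp [sqDist]

lemma ip_dualQ (x : Idx k n → EuclideanSpace ℝ (Fin m)) (z α β)
    {Y : Matrix (Idx k n) (Idx k n) ℝ} (hY : SDPFeasible Y) :
    ip (dualQ x z α β) Y = dualObj z α - ip β Y / 2 + ip (sqDist x) Y := by
  obtain ⟨ht, h1, h0, hp⟩ := hY
  have hs := ((psd_iff Y).1 hp).1
  have hr : ∀ p, ∑ q, Y p q = 1 := fun p => by
    have := congrFun h1 p
    simpa [mulVec, dotProduct] using this
  have e1 : ∑ p, ∑ q, z * (if p = q then 1 else 0) * Y p q = k * z := by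
    rw [← ht]; simp [trace, Finset.mul_sum, mul_comm]
  have e2 : ∑ p, ∑ q, α p * Y p q = ∑ p, α p := by
    simp [← Finset.mul_sum, hr]
  have e3 : ∑ p, ∑ q, α q * Y p q = ∑ p, α p := by
    rw [Finset.sum_comm]; rw [← e2]
    refine Finset.sum_congr rfl fun p _ => Finset.sum_congr rfl fun q _ => by rw [hs]
  have : ip (dualQ x z α β) Y = ∑ p, ∑ q, z * (if p = q then 1 else 0) * Y p q
     + (∑ p, ∑ q, α p * Y p q) / 2 + (∑ p, ∑ q, α q * Y p q) / 2 - ip β Y / 2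
     + ip (sqDist x) Y := by
    simp only [ip, dualQ, Finset.sum_div, ← Finset.sum_add_distrib, ← Finset.sum_sub_distrib]
    refine Finset.sum_congr rfl fun p _ => Finset.sum_congr rfl fun q _ => by ring
  rw [this, e1, e2, e3, dualObj]; ring

lemma weak (x : Idx k n → EuclideanSpace ℝ (Fin m)) {z α β}
    (h : DualFeasible x z α β)
    {Y : Matrix (Idx k n) (Idx k n) ℝ} (hY : SDPFeasible Y) :
    - ip (sqDist x) Y ≤ dualObj z α := by
  have h1 := ip_dualQ x z α β hY
  have h2 := ip_nonneg h.2.2 hY.2.2.2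
  have h3 : 0 ≤ ip β Y := Finset.sum_nonneg fun p _ => Finset.sum_nonneg fun q _ =>
    mul_nonneg (h.2.1 p q) (hY.2.2.1 p q)
  linarith

section strong
variable {ι : Type*} [Fintype ι] [DecidableEq ι]
set_option linter.unusedSectionVars false

def CC (M : Matrix ι ι ℝ) : Prop := ∃ β : Matrix ι ι ℝ, (∀ p q, 0 ≤ β p q) ∧ ∀ v, 0 ≤ qf (M - β) v

lemma CC_add {A B : Matrix ι ι ℝ} (hA : CC A) (hB : CC B) : CC (A + B) := by
  obtain ⟨a, ha, ha'⟩ := hA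
  obtain ⟨b, hb, hb'⟩ := hB
  refine ⟨a + b, fun p q => add_nonneg (ha p q) (hb p q), fun v => ?_⟩
  have := ha' v
  have := hb' v
  simp only [qf_sub, qf_add] at *
  linarith

lemma CC_smul {A : Matrix ι ι ℝ} (hA : CC A) {c : ℝ} (hc : 0 ≤ c) : CC (c • A) := by
  obtain ⟨a, ha, ha'⟩ := hA
  refine ⟨c • a, fun p q => mul_nonneg hc (ha p q), fun v => ?_⟩
  rw [← smul_sub, qf_smul]
  exact mul_nonneg hc (ha' v)

lemma CC_of_qf {A : Matrix ι ι ℝ} (hA : ∀ v, 0 ≤ qf A v) : CC A :=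
  ⟨0, fun _ _ => le_rfl, by simpa using hA⟩

lemma CC_of_nonneg {A : Matrix ι ι ℝ} (hA : ∀ p q, 0 ≤ A p q) : CC A :=
  ⟨A, hA, by simp [qf]⟩

/-- the linear map `(z, α, y), M ↦ zI + sym α + yD + M`. -/
noncomputable def TT (D : Matrix ι ι ℝ) :
    ((ℝ × (ι → ℝ) × ℝ) × Matrix ι ι ℝ) →ₗ[ℝ] Matrix ι ι ℝ where
  toFun e := Matrix.of fun p q => e.1.1 * (if p = q then 1 else 0) + (e.1.2.1 p + e.1.2.1 q) / 2
    + e.1.2.2 * D p q + e.2 p q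
  map_add' e f := by
    ext p q
    simp only [Matrix.of_apply, Prod.fst_add, Prod.snd_add, Pi.add_apply, Matrix.add_apply]
    ring
  map_smul' c e := by
    ext p q
    simp only [Matrix.of_apply, Prod.smul_fst, Prod.smul_snd, Pi.smul_apply, Matrix.smul_apply, smul_eq_mul,
      RingHom.id_apply]
    ring

lemma TT_apply (D : Matrix ι ι ℝ) (e) (p q : ι) : TT D e p q =
    e.1.1 * (if p = q then 1 else 0) + (e.1.2.1 p + e.1.2.1 q) / 2
    + e.1.2.2 * D p q + e.2 p q := rfl

noncomputable def cone (D : Matrix ι ι ℝ) :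
    PointedCone ℝ ((ℝ × (ι → ℝ) × ℝ) × Matrix ι ι ℝ) where
  carrier := {e | CC (TT D e)}
  add_mem' {a b} ha hb := by
    simp only [Set.mem_ofPred_eq, map_add] at *
    exact CC_add ha hb
  zero_mem' := by
    simp only [Set.mem_ofPred_eq, map_zero]
    exact CC_of_nonneg (by simp)
  smul_mem' c {a} ha := by
    simp only [Set.mem_ofPred_eq] at *
    have : TT D (c • a) = (c : ℝ) • TT D a := (TT D).map_smul (c : ℝ) a
    rw [this]
    exact CC_smul ha c.2

noncomputable def phi (k d : ℝ) : ((ℝ × (ι → ℝ) × ℝ) × Matrix ι ι ℝ) →ₗ[ℝ] ℝ where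
  toFun e := k * e.1.1 + ∑ p, e.1.2.1 p - e.1.2.2 * d
  map_add' e f := by
    simp [Finset.sum_add_distrib]; ring
  map_smul' c e := by
    simp [← Finset.mul_sum]; ring

lemma qf_one (v : ι → ℝ) : qf (1 : Matrix ι ι ℝ) v = ∑ p, v p ^ 2 := by
  simp [qf, Matrix.one_apply, sq]

lemma ip_std (g : Matrix ι ι ℝ →ₗ[ℝ] ℝ) (M : Matrix ι ι ℝ) :
    g M = ip M (fun p q => g (Matrix.single p q 1)) := by
  conv_lhs => rw [Matrix.matrix_eq_sum_single M]
  simp only [map_sum, ip]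
  refine Finset.sum_congr rfl fun p _ => Finset.sum_congr rfl fun q _ => ?_
  have : Matrix.single p q (M p q) = M p q • Matrix.single p q (1:ℝ) := by
    rw [Matrix.smul_single]; simp
  rw [this, map_smul, smul_eq_mul]

/-- Abstract strong duality from the Riesz extension theorem. -/
lemma riesz_dual (D : Matrix ι ι ℝ) (k d : ℝ)
    (h : ∀ z α y, CC (TT D ((z, α, y), 0)) → 0 ≤ k * z + ∑ p, α p - y * d) :
    ∃ W : Matrix ι ι ℝ, (∀ p q, W p q = W q p) ∧ (∀ p q, 0 ≤ W p q) ∧ (∀ v, 0 ≤ qf W v) ∧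
      ∀ z α y, ip (TT D ((z, α, y), 0)) W = k * z + ∑ p, α p - y * d := by
  obtain ⟨g, hg1, hg2⟩ := riesz_extension (cone D)
    ⟨LinearMap.ker (LinearMap.snd ℝ (ℝ × (ι → ℝ) × ℝ) (Matrix ι ι ℝ)),
      (phi k d).comp (Submodule.subtype _)⟩ (by
      rintro ⟨⟨⟨z, α, y⟩, M⟩, hM⟩ hx
      have hM' : M = 0 := by simpa using hM
      subst hM'
      exact h z α y hx) (by
      rintro ⟨⟨z, α, y⟩, M⟩
      refine ⟨⟨((∑ p, ∑ q, |M p q| - z, -α, -y), 0), by simp⟩, ?_⟩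
      change CC _
      refine CC_of_qf fun v => ?_
      have : TT D (((∑ p, ∑ q, |M p q| - z, -α, -y), 0) + ((z, α, y), M))
          = (∑ p, ∑ q, |M p q|) • (1 : Matrix ι ι ℝ) + M := by
        ext p q
        simp [TT_apply, Matrix.one_apply]
      erw [this]
      rw [qf_add, qf_smul, qf_one]
      linarith [(abs_le.1 (qf_le M v)).1])
  have hgz : ∀ M, CC M → 0 ≤ g (0, M) := fun M hM => hg2 _ (by
    change CC _
    convert hM
    ext p q; simp [TT_apply])
  set W : Matrix ι ι ℝ := fun p q => g (0, Matrix.single p q 1) with hW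
  have hgW : ∀ M, g (0, M) = ip M W := fun M => ip_std (g.comp (LinearMap.inr ℝ _ _)) M
  have hsingle : ∀ p q (A : Matrix ι ι ℝ), ip (Matrix.single p q 1) A = A p q := by
    intro p q A
    unfold ip
    rw [Finset.sum_eq_single p, Finset.sum_eq_single q]
    · simp
    · intro b _ hb; simp [hb.symm]
    · simp
    · intro b _ hb; simp [hb.symm]
    · simp
  refine ⟨W, ?_, ?_, ?_, ?_⟩
  · have key : ∀ p q, W q p ≤ W p q := by
      intro p q
      have := hgz (Matrix.single p q 1 - Matrix.single q p 1) (CC_of_qf fun v => by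
        rw [qf_sub, ← qf_transpose (Matrix.single q p 1)]; simp)
      have e : ((0 : ℝ × (ι → ℝ) × ℝ), Matrix.single p q (1:ℝ) - Matrix.single q p 1)
        = (0, Matrix.single p q (1:ℝ)) - (0, Matrix.single q p 1) := by simp
      rw [e, map_sub] at this
      simp only [hW]
      linarith
    exact fun p q => le_antisymm (key _ _) (key _ _)
  · intro p q
    exact hgz _ (CC_of_nonneg fun a b => by
      rw [Matrix.single_apply]; split_ifs <;> norm_num)
  · intro v
    have := hgz (Matrix.of fun p q => v p * v q) (CC_of_qf fun u => by
      have : qf (Matrix.of fun p q => v p * v q) u = (∑ p, u p * v p) ^ 2 := by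
        rw [sq, Finset.sum_mul_sum]; unfold qf
        refine Finset.sum_congr rfl fun p _ => Finset.sum_congr rfl fun q _ => by
          rw [Matrix.of_apply]; ring
      rw [this]; positivity)
    rwa [hgW] at this
  · intro z α y
    have h1 := hg1 ⟨((z, α, y), 0), by simp⟩
    have h1' : g ((z, α, y), 0) = k * z + ∑ p, α p - y * d := h1
    have hc : CC (0 : Matrix ι ι ℝ) := CC_of_nonneg (by simp)
    have h2 : 0 ≤ g ((z, α, y), - TT D ((z, α, y), 0)) := hg2 _ (by
      change CC _
      convert hc
      ext p q; simp [TT_apply])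
    have h3 : 0 ≤ g (-((z, α, y), - TT D ((z, α, y), 0))) := hg2 _ (by
      change CC _
      convert hc
      ext p q; simp [TT_apply]; split_ifs <;> ring)
    rw [map_neg] at h3
    have e : ((z, α, y), - TT D ((z, α, y), 0))
       = ((z, α, y), (0 : Matrix ι ι ℝ)) - (0, TT D ((z, α, y), 0)) := by simp
    rw [e, map_sub, hgW, h1'] at h2 h3
    linarith
end strong

lemma dual_of_CC (x : Idx k n → EuclideanSpace ℝ (Fin m)) {z α}
    (h : CC (TT (sqDist x) ((z, α, 1), 0))) : ∃ β, DualFeasible x z α β := by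
  obtain ⟨b, hb, hb'⟩ := h
  refine ⟨b + bᵀ, ?_, fun p q => add_nonneg (hb p q) (hb q p), ?_⟩
  · rw [Matrix.IsSymm, transpose_add, transpose_transpose, add_comm]
  · rw [psd_iff]
    constructor
    · intro p q
      simp only [dualQ, Matrix.add_apply, Matrix.transpose_apply, D_symm x p q, eq_comm (a := p)]
      ring
    · intro v
      have : dualQ x z α (b + bᵀ) = TT (sqDist x) ((z, α, 1), 0) - (1/2 : ℝ) • (b + bᵀ) := by
        ext p q; simp [dualQ, TT_apply]; ring
      have h2 := hb' v
      rw [this, qf_sub, qf_smul, qf_add, qf_transpose]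
      rw [qf_sub] at h2
      linarith

lemma CC_of_dual (x : Idx k n → EuclideanSpace ℝ (Fin m)) {z α β}
    (h : DualFeasible x z α β) : CC (TT (sqDist x) ((z, α, 1), 0)) := by
  refine ⟨(1/2 : ℝ) • β, fun p q => mul_nonneg (by norm_num) (h.2.1 p q), fun v => ?_⟩
  have : dualQ x z α β = TT (sqDist x) ((z, α, 1), 0) - (1/2 : ℝ) • β := by
    ext p q; simp [dualQ, TT_apply]; ring
  rw [← this]
  exact ((psd_iff _).1 h.2.2).2 v

lemma strong (x : Idx k n → EuclideanSpace ℝ (Fin m)) {z α β} (h : DualOptimal x z α β) :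
    ∃ W, SDPFeasible W ∧ ip (sqDist x) W = - dualObj z α := by
  obtain ⟨W, h1, h2, h3, h4⟩ := riesz_dual (sqDist x) k (dualObj z α) (by
    intro z' α' y hC
    have hD := CC_of_dual x h.1
    have hy : 0 < y + (|y| + 1) := by linarith [neg_abs_le y]
    have hc : 0 ≤ |y| + 1 := by positivity
    set c := |y| + 1
    have := CC_smul (CC_add hC (CC_smul hD hc)) (inv_nonneg.2 hy.le)
    rw [← map_smul, ← map_add, ← map_smul] at this
    have e : (y + c)⁻¹ • (((z', α', y), (0 : Matrix (Idx k n) (Idx k n) ℝ)) + c • ((z, α, (1:ℝ)), 0))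
      = (((y + c)⁻¹ * (z' + c * z), (y + c)⁻¹ • (α' + c • α), 1), 0) := by
      simp [hy.ne']
    rw [e] at this
    obtain ⟨b, hb⟩ := dual_of_CC x this
    have h5 := h.2 _ _ _ hb
    have e2 : dualObj ((y + c)⁻¹ * (z' + c * z)) ((y + c)⁻¹ • (α' + c • α))
      = (y + c)⁻¹ * (k * z' + ∑ p, α' p + c * dualObj z α) := by
      simp only [dualObj, Pi.smul_apply, Pi.add_apply, smul_eq_mul, ← Finset.mul_sum,
        Finset.sum_add_distrib]
      ring
    rw [e2, inv_mul_eq_div, le_div_iff₀ hy] at h5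
    linarith)
  refine ⟨W, ⟨?_, ?_, h2, (psd_iff W).2 ⟨h1, h3⟩⟩, ?_⟩
  · have := h4 1 0 0
    simpa [ip, TT_apply, trace] using this
  · funext p
    have := h4 0 (Pi.single p 1) 0
    have e : ip (TT (sqDist x) ((0, Pi.single p 1, 0), 0)) W = ∑ q, W p q := by
      have : ip (TT (sqDist x) ((0, Pi.single p 1, 0), 0)) W
        = (∑ a, ∑ b, (Pi.single p 1 : Idx k n → ℝ) a * W a b) / 2
          + (∑ a, ∑ b, (Pi.single p 1 : Idx k n → ℝ) b * W a b) / 2 := by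
        simp only [ip, TT_apply, Finset.sum_div, ← Finset.sum_add_distrib]
        refine Finset.sum_congr rfl fun p _ => Finset.sum_congr rfl fun q _ => by
          simp; ring
      rw [this]
      have e1 : ∑ a, ∑ b, (Pi.single p 1 : Idx k n → ℝ) a * W a b = ∑ q, W p q := by
        simp only [← Finset.mul_sum]
        simp [Pi.single_apply]
      have e2 : ∑ a, ∑ b, (Pi.single p 1 : Idx k n → ℝ) b * W a b = ∑ q, W p q := by
        simp [Pi.single_apply, h1 p]
      rw [e1, e2]; ring
    rw [e] at this
    simpa [mulVec, dotProduct] using this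
  · have := h4 0 0 1
    have e : TT (sqDist x) ((0, 0, 1), 0) = sqDist x := by ext p q; simp [TT_apply]
    rw [e] at this
    simpa using this

lemma feas_iff (x : Idx k n → EuclideanSpace ℝ (Fin m)) (z α β) :
    DualFeasible x z α β ↔ (∀ p q, β p q = β q p) ∧ (∀ p q, 0 ≤ β p q) ∧
      ∀ v, 0 ≤ qf (dualQ x z α β) v := by
  unfold DualFeasible
  rw [psd_iff]
  constructor
  · rintro ⟨h1, h2, -, h3⟩
    exact ⟨fun p q => (h1.apply p q).symm, h2, h3⟩
  · rintro ⟨h1, h2, h3⟩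
    refine ⟨Matrix.ext fun p q => h1 q p, h2, fun p q => ?_, h3⟩
    simp only [dualQ, D_symm x p q, eq_comm (a := p), h1 p q]
    ring

lemma bounds (x : Idx k n → EuclideanSpace ℝ (Fin m)) (hk : 1 < k)
    (hN : k < Fintype.card (Idx k n)) :
    ∃ R : ℝ, ∀ z α β, DualFeasible x z α β → dualObj z α ≤ 0 →
      (-R ≤ z ∧ z ≤ R) ∧ (∀ p, -R ≤ α p ∧ α p ≤ R) ∧ ∀ p q, -R ≤ β p q ∧ β p q ≤ R := by
  obtain ⟨N, hNdef⟩ : ∃ N : ℝ, N = (Fintype.card (Idx k n) : ℝ) := ⟨_, rfl⟩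
  have hk' : (1:ℝ) < k := by exact_mod_cast hk
  have hN' : (k:ℝ) < N := by rw [hNdef]; exact_mod_cast hN
  set S : ℝ := ∑ p, ∑ q, sqDist x p q with hS
  have hS0 : 0 ≤ S := Finset.sum_nonneg fun p _ => Finset.sum_nonneg fun q _ => D_nonneg x p q
  have hDS : ∀ p q, sqDist x p q ≤ S := fun p q =>
    (Finset.single_le_sum (f := fun q => sqDist x p q) (fun q _ => D_nonneg x p q)
      (Finset.mem_univ q)).trans
    (Finset.single_le_sum (f := fun p => ∑ q, sqDist x p q)
      (fun p _ => Finset.sum_nonneg fun q _ => D_nonneg x p q) (Finset.mem_univ p))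
  set Z : ℝ := S / (N * (k - 1)) with hZ
  have hden : 0 < N * (k - 1) := by
    apply mul_pos <;> linarith
  have hZ0 : 0 ≤ Z := div_nonneg hS0 hden.le
  have hNZ : 0 ≤ N * Z := mul_nonneg (by linarith) hZ0
  refine ⟨4 * Z + 4 * (N * Z) + 2 * S, fun z α β hf ho => ?_⟩
  rw [feas_iff] at hf
  obtain ⟨hs, hb, hq⟩ := hf
  have hdiag : ∀ p, 0 ≤ z + α p := by
    intro p
    have := hq (Pi.single p 1)
    rw [qf_single] at this
    simp only [dualQ, if_true, D_diag] at this
    linarith [hb p p]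
  have hsum : 0 ≤ N * z + ∑ p, α p := by
    have := Finset.sum_nonneg fun p (_ : p ∈ Finset.univ) => hdiag p
    simpa [Finset.sum_add_distrib, hNdef] using this
  unfold dualObj at ho
  have hz0 : 0 ≤ z := by
    by_contra hc
    push Not at hc
    nlinarith
  have hz1 : z ≤ Z := by
    rw [hZ, le_div_iff₀ hden]
    have := hq (fun _ => 1)
    have e : qf (dualQ x z α β) (fun _ => 1) = N * z + N * ∑ p, α p - (∑ p, ∑ q, β p q) / 2 + S := by
      have : qf (dualQ x z α β) (fun _ => 1) = (∑ p : Idx k n, ∑ q : Idx k n, z * (if p = q then 1 else 0))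
          + (∑ p, ∑ _q : Idx k n, α p) / 2 + (∑ _p : Idx k n, ∑ q, α q) / 2
          - (∑ p, ∑ q, β p q) / 2 + S := by
        simp only [hS, qf, dualQ, Finset.sum_div, ← Finset.sum_add_distrib,
          ← Finset.sum_sub_distrib]
        refine Finset.sum_congr rfl fun p _ => Finset.sum_congr rfl fun q _ => by ring
      rw [this]
      simp [← Finset.mul_sum, hNdef]
      ring
    rw [e] at this
    have hB : 0 ≤ ∑ p, ∑ q, β p q :=
      Finset.sum_nonneg fun p _ => Finset.sum_nonneg fun q _ => hb p q
    have hN0 : 0 ≤ N := by linarith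
    have := mul_le_mul_of_nonneg_left ho hN0
    linarith
  have ha1 : ∀ p, α p ≤ N * Z := by
    intro p
    have h1 : z + α p ≤ ∑ q, (z + α q) :=
      Finset.single_le_sum (f := fun q => z + α q) (fun q _ => hdiag q) (Finset.mem_univ p)
    have h2 : ∑ q, (z + α q) = N * z + ∑ q, α q := by
      simp [Finset.sum_add_distrib, hNdef]
    have h3 : 0 ≤ k * z := by positivity
    have h4 : N * z ≤ N * Z := mul_le_mul_of_nonneg_left hz1 (by linarith)
    linarith
  refine ⟨⟨by linarith, by linarith⟩, fun p => ⟨by linarith [hdiag p], by linarith [ha1 p]⟩,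
    fun p q => ⟨by linarith [hb p q], ?_⟩⟩
  have := hq (Pi.single p 1 + Pi.single q 1)
  rw [qf_single_add] at this
  simp only [dualQ, if_true, D_diag, hs q p, D_symm x q p, eq_comm (a := q)] at this
  have hi : z * (if p = q then 1 else 0) ≤ z := by split_ifs <;> simp [hz0]
  linarith [hb p p, hb q q, hDS p q, ha1 p, ha1 q]

lemma exists_dual (x : Idx k n → EuclideanSpace ℝ (Fin m)) (hk : 1 < k)
    (hN : k < Fintype.card (Idx k n)) : ∃ z α β, DualOptimal x z α β := by
  obtain ⟨R, hR⟩ := bounds x hk hN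
  let K : Set (ℝ × (Idx k n → ℝ) × (Idx k n → Idx k n → ℝ)) :=
    {t | DualFeasible x t.1 t.2.1 (Matrix.of t.2.2) ∧ dualObj t.1 t.2.1 ≤ 0}
  have hKI : K ⊆ Set.Icc (-R, fun _ => -R, fun _ _ => -R) (R, fun _ => R, fun _ _ => R) := by
    rintro ⟨z, α, β⟩ ⟨h1, h2⟩
    obtain ⟨a, b, c⟩ := hR _ _ _ h1 h2
    exact ⟨⟨a.1, fun p => (b p).1, fun p q => (c p q).1⟩,
      ⟨a.2, fun p => (b p).2, fun p q => (c p q).2⟩⟩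
  have hKc : IsClosed K := by
    have : K = {t | (∀ p q, t.2.2 p q = t.2.2 q p) ∧ (∀ p q, 0 ≤ t.2.2 p q) ∧
      (∀ v, 0 ≤ qf (dualQ x t.1 t.2.1 t.2.2) v) ∧ dualObj t.1 t.2.1 ≤ 0} := by
      ext t
      change (_ ∧ _) ↔ (_ ∧ _ ∧ _ ∧ _)
      rw [feas_iff]
      simp only [and_assoc]
      rfl
    rw [this]
    have c1 : IsClosed {t : ℝ × (Idx k n → ℝ) × (Idx k n → Idx k n → ℝ) |
        ∀ p q, t.2.2 p q = t.2.2 q p} := by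
      simp only [Set.ofPred_forall]
      exact isClosed_iInter fun p => isClosed_iInter fun q =>
        isClosed_eq (by fun_prop) (by fun_prop)
    have c2 : IsClosed {t : ℝ × (Idx k n → ℝ) × (Idx k n → Idx k n → ℝ) |
        ∀ p q, 0 ≤ t.2.2 p q} := by
      simp only [Set.ofPred_forall]
      exact isClosed_iInter fun p => isClosed_iInter fun q =>
        isClosed_le (by fun_prop) (by fun_prop)
    have c3 : IsClosed {t : ℝ × (Idx k n → ℝ) × (Idx k n → Idx k n → ℝ) |
        ∀ v, 0 ≤ qf (dualQ x t.1 t.2.1 t.2.2) v} := by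
      simp only [Set.ofPred_forall]
      exact isClosed_iInter fun v =>
        isClosed_le (by fun_prop) (by unfold qf dualQ; fun_prop)
    have c4 : IsClosed {t : ℝ × (Idx k n → ℝ) × (Idx k n → Idx k n → ℝ) |
        dualObj t.1 t.2.1 ≤ 0} :=
      isClosed_le (by unfold dualObj; fun_prop) (by fun_prop)
    exact c1.inter (c2.inter (c3.inter c4))
  have hK : IsCompact K := isCompact_Icc.of_isClosed_subset hKc hKI
  have h0 : DualFeasible x 0 0 ((2:ℝ) • sqDist x) := by
    rw [feas_iff]
    refine ⟨fun p q => by simp only [Matrix.smul_apply, D_symm x p q],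
      fun p q => mul_nonneg (by norm_num) (D_nonneg x p q), fun v => ?_⟩
    have : dualQ x 0 0 ((2:ℝ) • sqDist x) = 0 := by
      ext p q; simp [dualQ]
    rw [this]; simp [qf]
  have hne : K.Nonempty := ⟨(0, 0, (2:ℝ) • sqDist x), h0, by simp [dualObj]⟩
  obtain ⟨⟨z, α, β⟩, ht, hmin⟩ := hK.exists_isMinOn hne
    (f := fun t => dualObj t.1 t.2.1) (by unfold dualObj; fun_prop)
  refine ⟨z, α, Matrix.of β, ht.1, fun z' α' β' h' => ?_⟩
  rcases le_or_gt (dualObj z' α') 0 with h | h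
  · exact hmin (a := (z', α', β')) ⟨h', h⟩
  · exact ht.2.trans h.le

/-- the clustering matrix -/
noncomputable def XX (k : ℕ) (n : Fin k → ℕ) : Matrix (Idx k n) (Idx k n) ℝ :=
  fun p q => if p.1 = q.1 then ((n p.1 : ℝ))⁻¹ else 0

lemma XX_symm (p q : Idx k n) : XX k n p q = XX k n q p := by
  unfold XX
  by_cases h : p.1 = q.1
  · simp [h]
  · simp [h, Ne.symm h]

lemma XX_nonneg (p q : Idx k n) : 0 ≤ XX k n p q := by
  unfold XX
  split_ifs <;> positivity

lemma row_XX (f : Idx k n → ℝ) (a : Fin k) (i : Fin (n a)) :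
    ∑ q, f q * XX k n ⟨a, i⟩ q = (n a : ℝ)⁻¹ * ∑ j, f ⟨a, j⟩ := by
  rw [Fintype.sum_sigma, Finset.sum_eq_single a]
  · simp [XX, Finset.mul_sum, mul_comm]
  · intro b _ hb
    simp [XX, Ne.symm hb]
  · simp

lemma ip_XX (M : Matrix (Idx k n) (Idx k n) ℝ) :
    ip M (XX k n) = ∑ a, (n a : ℝ)⁻¹ * ∑ i, ∑ j, M ⟨a, i⟩ ⟨a, j⟩ := by
  unfold ip
  rw [Fintype.sum_sigma]
  simp only [row_XX, Finset.mul_sum]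

lemma XX_feas (hn : ∀ a, 0 < n a) : SDPFeasible (XX k n) := by
  have hn' : ∀ a, (n a : ℝ) ≠ 0 := fun a => by exact_mod_cast (hn a).ne'
  refine ⟨?_, ?_, XX_nonneg, (psd_iff _).2 ⟨XX_symm, fun v => ?_⟩⟩
  · simp only [trace, diag]
    rw [Fintype.sum_sigma]
    simp [XX, hn']
  · funext ⟨a, i⟩
    have := row_XX (fun _ => 1) a i
    simp only [mulVec, dotProduct, mul_comm _ (1:ℝ)]
    rw [this]
    simp [hn']
  · have : qf (XX k n) v = ip (Matrix.of fun p q => v p * v q) (XX k n) := rfl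
    rw [this, ip_XX]
    refine Finset.sum_nonneg fun a _ => mul_nonneg (by positivity) ?_
    simp only [Matrix.of_apply]
    rw [← Finset.sum_mul_sum]
    exact mul_self_nonneg _

lemma solves_iff (x : Idx k n → EuclideanSpace ℝ (Fin m)) (hn : ∀ a, 0 < n a) :
    SolvesSDP x (XX k n) ↔ ∀ Y, SDPFeasible Y → ip (sqDist x) (XX k n) ≤ ip (sqDist x) Y := by
  unfold SolvesSDP
  constructor
  · rintro ⟨-, h⟩ Y hY
    have := h Y hY
    rwa [trace_mul_eq_ip XX_symm, trace_mul_eq_ip ((psd_iff Y).1 hY.2.2.2).1] at this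
  · intro h
    refine ⟨XX_feas hn, fun Y hY => ?_⟩
    rw [trace_mul_eq_ip XX_symm, trace_mul_eq_ip ((psd_iff Y).1 hY.2.2.2).1]
    exact h Y hY

lemma unique_one (hk : k = 1) (hn : ∀ a, 0 < n a) {Y : Matrix (Idx k n) (Idx k n) ℝ}
    (hY : SDPFeasible Y) : Y = XX k n := by
  subst hk
  have hX := XX_feas hn
  have hn' : (n 0 : ℝ) ≠ 0 := by exact_mod_cast (hn 0).ne'
  have hval : ∀ p q, XX 1 n p q = (n 0 : ℝ)⁻¹ := fun p q => by
    unfold XX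
    rw [if_pos (Subsingleton.elim _ _), Subsingleton.elim p.1 0]
  have hsy := ((psd_iff Y).1 hY.2.2.2).1
  have hp := ((psd_iff Y).1 hY.2.2.2).2
  have hr : ∀ p, ∑ q, Y p q = 1 := fun p => by
    have := congrFun hY.2.1 p
    simpa [mulVec, dotProduct] using this
  have hc : ((Finset.univ : Finset (Idx 1 n)).card : ℝ) = n 0 := by simp
  have key : (Y - XX 1 n).PosSemidef := by
    rw [psd_iff]
    refine ⟨fun p q => by rw [Matrix.sub_apply, Matrix.sub_apply, hsy, XX_symm], fun v => ?_⟩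
    rw [qf_sub]
    set s := ∑ p, v p with hs
    have h1 := hp (fun p => v p - s / n 0)
    have e1 : qf Y (fun p => v p - s / n 0) = qf Y v - s ^ 2 / n 0 := by
      have : qf Y (fun p => v p - s / n 0) = qf Y v - s / n 0 * (∑ p, ∑ q, v p * Y p q)
        - s / n 0 * (∑ p, ∑ q, v q * Y p q) + (s / n 0) ^ 2 * ∑ p, ∑ q, Y p q := by
        simp only [qf, Finset.mul_sum, ← Finset.sum_add_distrib, ← Finset.sum_sub_distrib]
        refine Finset.sum_congr rfl fun p _ => Finset.sum_congr rfl fun q _ => by ring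
      have e2 : ∑ p, ∑ q, v p * Y p q = s := by simp [← Finset.mul_sum, hr, hs]
      have e3 : ∑ p, ∑ q, v q * Y p q = s := by
        rw [Finset.sum_comm, ← e2]
        refine Finset.sum_congr rfl fun p _ => Finset.sum_congr rfl fun q _ => by rw [hsy]
      have e4 : ∑ p, ∑ q, Y p q = n 0 := by
        simp only [hr, Finset.sum_const, nsmul_eq_mul, mul_one, hc]
      rw [this, e2, e3, e4]
      field_simp
      ring
    have e5 : qf (XX 1 n) v = s ^ 2 / n 0 := by
      simp only [qf, hval]
      rw [hs, sq, Finset.sum_mul_sum]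
      simp only [Finset.sum_mul, div_eq_mul_inv]
    rw [e5, ← e1]
    exact h1
  have ht : (Y - XX 1 n).trace = 0 := by rw [trace_sub, hY.1, hX.1, sub_self]
  exact sub_eq_zero.1 (key.trace_eq_zero_iff.1 ht)

lemma unique_all (hN : k = Fintype.card (Idx k n))
    {Y : Matrix (Idx k n) (Idx k n) ℝ}
    (hY : SDPFeasible Y) : Y = 1 := by
  have hr : ∀ p, ∑ q, Y p q = 1 := fun p => by
    have := congrFun hY.2.1 p
    simpa [mulVec, dotProduct] using this
  have h0 := hY.2.2.1
  have hle : ∀ p, Y p p ≤ 1 := fun p => by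
    rw [← hr p]
    exact Finset.single_le_sum (f := fun q => Y p q) (fun q _ => h0 p q) (Finset.mem_univ p)
  have ht : ∑ p, (1 - Y p p) = 0 := by
    have := hY.1
    simp only [trace, diag] at this
    rw [Finset.sum_sub_distrib, this]
    simp only [Finset.sum_const, Finset.card_univ, ← hN]
    simp
  have hd : ∀ p, Y p p = 1 := fun p => by
    have := (Finset.sum_eq_zero_iff_of_nonneg (fun p _ => by linarith [hle p])).1 ht p
      (Finset.mem_univ p)
    linarith
  ext p q
  by_cases h : p = q
  · subst h; simp [hd]
  · rw [Matrix.one_apply_ne h]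
    have h1 := hr p
    rw [← Finset.add_sum_erase _ _ (Finset.mem_univ p), hd p] at h1
    have h2 : ∑ r ∈ Finset.univ.erase p, Y p r = 0 := by linarith
    exact (Finset.sum_eq_zero_iff_of_nonneg (fun r _ => h0 p r)).1 h2 q
      (by simp [Ne.symm h])

lemma card_ge (hn : ∀ a, 0 < n a) : k ≤ Fintype.card (Idx k n) := by
  rw [Fintype.card_sigma]
  calc k = ∑ _a : Fin k, 1 := by simp
    _ ≤ _ := Finset.sum_le_sum fun a _ => by simpa using Nat.succ_le_of_lt (hn a)

lemma a_to_b (x : Idx k n → EuclideanSpace ℝ (Fin m)) (hn : ∀ a, 0 < n a)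
    (h : SolvesSDP x (XX k n)) {z α β} (ho : DualOptimal x z α β) (a : Fin k) :
    (∀ i : Fin (n a), ∑ j : Fin (n a), dualQ x z α β ⟨a, i⟩ ⟨a, j⟩ = 0) ∧
          (∀ i j : Fin (n a), β ⟨a, i⟩ ⟨a, j⟩ = 0) := by
  have hn' : ∀ a, 0 < (n a : ℝ) := fun a => by exact_mod_cast hn a
  rw [solves_iff x hn] at h
  obtain ⟨W, hW, hWo⟩ := strong x ho
  have h1 := h W hW
  have h2 := ip_dualQ x z α β (XX_feas hn)
  have h3 := ip_nonneg ho.1.2.2 (XX_feas hn).2.2.2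
  have h4' : ∀ p ∈ (Finset.univ : Finset (Idx k n)), 0 ≤ ∑ q, β p q * XX k n p q :=
    fun p _ => Finset.sum_nonneg fun q _ => mul_nonneg (ho.1.2.1 p q) (XX_nonneg p q)
  have h4 : 0 ≤ ip β (XX k n) := Finset.sum_nonneg h4'
  have hQ : ip (dualQ x z α β) (XX k n) = 0 := by linarith
  have hB : ip β (XX k n) = 0 := by linarith
  have hqv : ∀ (a : Fin k) (p : Idx k n),
      (dualQ x z α β *ᵥ (fun q => if q.1 = a then 1 else 0)) p
        = ∑ j, dualQ x z α β p ⟨a, j⟩ := by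
    intro a p
    simp only [mulVec, dotProduct]
    rw [Fintype.sum_sigma, Finset.sum_eq_single a]
    · simp
    · intro b _ hb; simp [hb]
    · simp
  have hqd : ∀ a : Fin k, (fun q : Idx k n => if q.1 = a then (1:ℝ) else 0) ⬝ᵥ
      (dualQ x z α β *ᵥ (fun q => if q.1 = a then 1 else 0))
        = ∑ i, ∑ j, dualQ x z α β ⟨a, i⟩ ⟨a, j⟩ := by
    intro a
    simp only [dotProduct, hqv]
    rw [Fintype.sum_sigma, Finset.sum_eq_single a]
    · simp
    · intro b _ hb; simp [hb]
    · simp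
  constructor
  · have hnn : ∀ a, 0 ≤ ∑ i, ∑ j, dualQ x z α β ⟨a, i⟩ ⟨a, j⟩ := fun a => by
      rw [← hqd, dot_eq_qf]
      exact ((psd_iff _).1 ho.1.2.2).2 _
    rw [ip_XX] at hQ
    have h5 := (Finset.sum_eq_zero_iff_of_nonneg
      (fun a _ => mul_nonneg (inv_nonneg.2 (hn' a).le) (hnn a))).1 hQ a (Finset.mem_univ a)
    have h6 := (mul_eq_zero.1 h5).resolve_left (inv_ne_zero (hn' a).ne')
    rw [← hqd] at h6
    have h7 := (ho.1.2.2.dotProduct_mulVec_zero_iff _).1 (by rw [star_trivial]; exact h6)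
    intro i
    rw [← hqv, h7]; rfl
  · intro i j
    have h5 := (Finset.sum_eq_zero_iff_of_nonneg h4').1 hB ⟨a, i⟩ (Finset.mem_univ _)
    have h6 := (Finset.sum_eq_zero_iff_of_nonneg
      (fun q _ => mul_nonneg (ho.1.2.1 ⟨a, i⟩ q) (XX_nonneg _ q))).1 h5 ⟨a, j⟩ (Finset.mem_univ _)
    refine (mul_eq_zero.1 h6).resolve_right ?_
    simp [XX, (hn' a).ne']

lemma b_to_c (x : Idx k n → EuclideanSpace ℝ (Fin m)) (hn : ∀ a, 0 < n a)
    {z α β} (a : Fin k)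
    (h : (∀ i : Fin (n a), ∑ j : Fin (n a), dualQ x z α β ⟨a, i⟩ ⟨a, j⟩ = 0) ∧
          (∀ i j : Fin (n a), β ⟨a, i⟩ ⟨a, j⟩ = 0)) (r : Fin (n a)) :
    α ⟨a, r⟩ = -z / (n a : ℝ)
            + ((n a : ℝ) ^ 2)⁻¹ * ∑ i : Fin (n a), ∑ j : Fin (n a), sqDist x ⟨a, i⟩ ⟨a, j⟩
            - (2 / (n a : ℝ)) * ∑ j : Fin (n a), sqDist x ⟨a, r⟩ ⟨a, j⟩ := by
  have hn' : (n a : ℝ) ≠ 0 := by exact_mod_cast (hn a).ne'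
  obtain ⟨h1, h2⟩ := h
  set s := ∑ j, α ⟨a, j⟩ with hs
  have h3 : ∀ i, z + (n a * α ⟨a, i⟩ + s) / 2 + ∑ j, sqDist x ⟨a, i⟩ ⟨a, j⟩ = 0 := by
    intro i
    rw [← h1 i]
    simp only [dualQ, h2, Finset.sum_add_distrib, Finset.sum_sub_distrib, ← Finset.sum_div,
      ← hs, ← Finset.mul_sum]
    simp
  have h4 : n a * z + n a * s + ∑ i, ∑ j, sqDist x ⟨a, i⟩ ⟨a, j⟩ = 0 := by
    have := Finset.sum_congr rfl fun i (_ : i ∈ Finset.univ) => h3 i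
    simp only [Finset.sum_add_distrib, ← Finset.sum_div, ← Finset.mul_sum, ← hs] at this
    simp at this
    linarith
  have h5 := h3 r
  set S := ∑ i, ∑ j, sqDist x ⟨a, i⟩ ⟨a, j⟩
  set t := ∑ j, sqDist x ⟨a, r⟩ ⟨a, j⟩
  have h6 : s = - z - S / n a := by field_simp; linarith
  rw [h6] at h5
  have h7 : α ⟨a, r⟩ = (-2 * z - 2 * t + z + S / n a) / n a := by
    rw [eq_div_iff hn']; linarith
  rw [h7]; field_simp; ring

lemma c_to_a (x : Idx k n → EuclideanSpace ℝ (Fin m)) (hn : ∀ a, 0 < n a)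
    (h : ∀ (z : ℝ) (α : Idx k n → ℝ) (β : Matrix (Idx k n) (Idx k n) ℝ),
        DualOptimal x z α β → ∀ (a : Fin k) (r : Fin (n a)),
          α ⟨a, r⟩ = -z / (n a : ℝ)
            + ((n a : ℝ) ^ 2)⁻¹ * ∑ i : Fin (n a), ∑ j : Fin (n a), sqDist x ⟨a, i⟩ ⟨a, j⟩
            - (2 / (n a : ℝ)) * ∑ j : Fin (n a), sqDist x ⟨a, r⟩ ⟨a, j⟩) :
    SolvesSDP x (XX k n) := by
  rw [solves_iff x hn]
  intro Y hY
  rcases (card_ge hn).eq_or_lt with hN | hN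
  · rw [unique_all hN hY, unique_all hN (XX_feas hn)]
  by_cases hk1 : k = 1
  · rw [unique_one hk1 hn hY]
  have hk : 1 < k := by
    rcases Nat.lt_or_ge 1 k with h | h
    · exact h
    · have : k = 0 := by omega
      subst this
      simp at hN
  obtain ⟨z, α, β, ho⟩ := exists_dual x hk hN
  have hw := weak x ho.1 hY
  have he : dualObj z α = - ip (sqDist x) (XX k n) := by
    rw [ip_XX, dualObj, Fintype.sum_sigma]
    have : ∀ a, ∑ r, α ⟨a, r⟩ = -z - (n a : ℝ)⁻¹ * ∑ i, ∑ j, sqDist x ⟨a, i⟩ ⟨a, j⟩ := by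
      intro a
      have hn' : (n a : ℝ) ≠ 0 := by exact_mod_cast (hn a).ne'
      simp only [h z α β ho a, Finset.sum_sub_distrib, ← Finset.mul_sum, Finset.sum_const,
        Finset.card_univ, Fintype.card_fin, nsmul_eq_mul]
      field_simp
      ring
    simp only [this, Finset.sum_sub_distrib]
    simp
    ring
  linarith
end KM


/-- For the clustering matrix `X = Σ_a (1/n_a)·1_a1_aᵀ`, the following
are equivalent: (a) `X` solves the k-means SDP; (b) every dual optimizer `(z, α, β)`
satisfies `Q^{(a,a)}1 = 0` and `β^{(a,a)} = 0` for every cluster `a`; (c) every dual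
optimizer `(z, α, β)` satisfies
`α_{a,r} = −z/n_a + (1/n_a²)·1ᵀD^{(a,a)}1 − (2/n_a)·e_rᵀD^{(a,a)}1` for all `a, r`. -/
theorem kmeans_SDP_integral_optimality
    (m k : ℕ) (n : Fin k → ℕ) (hn : ∀ a, 0 < n a)
    (x : Idx k n → EuclideanSpace ℝ (Fin m))
    (X : Matrix (Idx k n) (Idx k n) ℝ)
    (hX : X = fun p q => if p.1 = q.1 then ((n p.1 : ℝ))⁻¹ else 0) :
    (SolvesSDP x X ↔
      (∀ (z : ℝ) (α : Idx k n → ℝ) (β : Matrix (Idx k n) (Idx k n) ℝ),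
        DualOptimal x z α β → ∀ a : Fin k,
          (∀ i : Fin (n a), ∑ j : Fin (n a), dualQ x z α β ⟨a, i⟩ ⟨a, j⟩ = 0) ∧
          (∀ i j : Fin (n a), β ⟨a, i⟩ ⟨a, j⟩ = 0))) ∧
    (SolvesSDP x X ↔
      (∀ (z : ℝ) (α : Idx k n → ℝ) (β : Matrix (Idx k n) (Idx k n) ℝ),
        DualOptimal x z α β → ∀ (a : Fin k) (r : Fin (n a)),
          α ⟨a, r⟩ = -z / (n a : ℝ)
            + ((n a : ℝ) ^ 2)⁻¹ * ∑ i : Fin (n a), ∑ j : Fin (n a), sqDist x ⟨a, i⟩ ⟨a, j⟩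
            - (2 / (n a : ℝ)) * ∑ j : Fin (n a), sqDist x ⟨a, r⟩ ⟨a, j⟩)) := by
  have hXX : X = KM.XX k n := hX
  clear hX
  subst hXX
  have hab : SolvesSDP x (KM.XX k n) → _ := fun h z α β ho a => KM.a_to_b x hn h (z := z) (α := α)
    (β := β) ho a
  exact ⟨⟨hab, fun h => KM.c_to_a x hn fun z α β ho a => KM.b_to_c x hn a (h z α β ho a)⟩,
    ⟨fun h z α β ho a => KM.b_to_c x hn a (hab h z α β ho a), KM.c_to_a x hn⟩⟩
end

section
/- Let the index set {1,…,N} be partitioned into k clusters of sizes n_1,…,n_k, and let E be the N×N matrix whose (a,b) block is E^{(a,b)} := (1/2)(1/n_a + 1/n_b)·11ᵀ. Then: (i) rank(E) ∈ {1,2}; (ii) the eigenvalue λ of E of largest magnitude satisfies λ ≥ k; (iii) if rank(E) = 2, then the other nonzero eigenvalue of E is negative; (iv) every eigenvector of E corresponding to a nonzero eigenvalue lies in the span of the cluster indicator vectors {1_a}_{a=1}^k. -/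
open scoped BigOperators
open Matrix

namespace Stmt1

/-- Index type for `N` points partitioned into `k` clusters of sizes `n 0, …, n (k−1)`. -/
abbrev Idx (k : ℕ) (n : Fin k → ℕ) := (a : Fin k) × Fin (n a)

/-- The indicator vector `1_a` of cluster `a`. -/
def indicator {k : ℕ} {n : Fin k → ℕ} (a : Fin k) : Idx k n → ℝ :=
  fun p => if p.1 = a then 1 else 0

/-- `(λ, v)` is an eigenpair of the matrix `E`. -/
def IsEigenPair {k : ℕ} {n : Fin k → ℕ} (E : Matrix (Idx k n) (Idx k n) ℝ)
    (lam : ℝ) (v : Idx k n → ℝ) : Prop :=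
  v ≠ 0 ∧ E *ᵥ v = lam • v

/-- `λ` is an eigenvalue of the matrix `E`. -/
def IsEigenvalue {k : ℕ} {n : Fin k → ℕ} (E : Matrix (Idx k n) (Idx k n) ℝ)
    (lam : ℝ) : Prop :=
  ∃ v, IsEigenPair E lam v

end Stmt1

open Stmt1

/-- For the matrix `E` with blocks `E^{(a,b)} = (1/2)(1/n_a + 1/n_b)11ᵀ`:
(i) `rank E ∈ {1, 2}`; (ii) the eigenvalue of largest magnitude satisfies `λ ≥ k`;
(iii) if `rank E = 2`, the other nonzero eigenvalue is negative; (iv) eigenvectors with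
nonzero eigenvalue lie in the span of the cluster indicators. -/
theorem eigenstructure_of_E
    (k : ℕ) (hk : 0 < k) (n : Fin k → ℕ) (hn : ∀ a, 0 < n a)
    (E : Matrix (Idx k n) (Idx k n) ℝ)
    (hE : ∀ p q : Idx k n,
      E p q = (1 / 2) * ((n p.1 : ℝ)⁻¹ + (n q.1 : ℝ)⁻¹)) :
    (E.rank = 1 ∨ E.rank = 2) ∧
    (∀ lam : ℝ, IsEigenvalue E lam → (∀ μ : ℝ, IsEigenvalue E μ → |μ| ≤ |lam|) →
      (k : ℝ) ≤ lam) ∧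
    (E.rank = 2 →
      ∀ lam μ : ℝ, IsEigenvalue E lam → IsEigenvalue E μ →
        (∀ ν : ℝ, IsEigenvalue E ν → |ν| ≤ |lam|) → μ ≠ 0 → μ ≠ lam → μ < 0) ∧
    (∀ (lam : ℝ) (v : Idx k n → ℝ), lam ≠ 0 → IsEigenPair E lam v →
      v ∈ Submodule.span ℝ (Set.range (indicator (k := k) (n := n)))) := by
  classical
  set w : Idx k n → ℝ := fun p => (n p.1 : ℝ)⁻¹ with hw
  have hwpos : ∀ p, 0 < w p := fun p => by
    have := hn p.1
    simp only [hw]; positivity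
  let p0 : Idx k n := ⟨⟨0, hk⟩, ⟨0, hn _⟩⟩
  have hkR : (0 : ℝ) < k := by exact_mod_cast hk
  have hsw : ∑ p, w p = k := by
    rw [Fintype.sum_sigma]
    have : ∀ a : Fin k, ∑ y : Fin (n a), w ⟨a, y⟩ = 1 := fun a => by
      have h : (n a : ℝ) ≠ 0 := by exact_mod_cast (hn a).ne'
      simp [hw, h]
    simp [this]
  set N : ℝ := ∑ _p : Idx k n, (1 : ℝ) with hN
  set Q : ℝ := ∑ p, w p ^ 2 with hQ
  have hNpos : 0 < N := Finset.sum_pos (fun _ _ => one_pos) ⟨p0, Finset.mem_univ _⟩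
  have hQpos : 0 < Q := Finset.sum_pos (fun p _ => pow_pos (hwpos p) 2) ⟨p0, Finset.mem_univ _⟩
  have hCS : (k : ℝ) ^ 2 ≤ N * Q := by
    have h := Finset.sum_mul_sq_le_sq_mul_sq Finset.univ (fun _ : Idx k n => (1 : ℝ)) w
    simp only [one_mul, one_pow, hsw] at h
    exact h
  have hmul : ∀ (v : Idx k n → ℝ) p,
      (E *ᵥ v) p = (1 / 2) * ((∑ q, v q) * w p + ∑ q, w q * v q) := fun v p => by
    simp only [Matrix.mulVec, dotProduct, hE]
    rw [Finset.sum_mul, ← Finset.sum_add_distrib, Finset.mul_sum]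
    refine Finset.sum_congr rfl fun q _ => ?_
    simp only [hw]; ring
  have hlin1 : ∀ a b : ℝ, ∑ q, (a * w q + b) = a * k + b * N := fun a b => by
    rw [Finset.sum_add_distrib, ← Finset.mul_sum, hsw, hN, Finset.mul_sum]; simp
  have hlin2 : ∀ a b : ℝ, ∑ q, w q * (a * w q + b) = a * Q + b * k := fun a b => by
    rw [← hsw, hQ, Finset.mul_sum, Finset.mul_sum, ← Finset.sum_add_distrib]
    refine Finset.sum_congr rfl fun q _ => ?_
    ring
  set s := Real.sqrt (N * Q) with hs
  have hss : s ^ 2 = N * Q := Real.sq_sqrt (by positivity)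
  have hks : (k : ℝ) ≤ s := Real.le_sqrt_of_sq_le hCS
  have hchar : ∀ lam : ℝ, lam ≠ 0 → IsEigenvalue E lam →
      lam = (k + s) / 2 ∨ lam = (k - s) / 2 := by
    rintro lam h0 ⟨v, hv0, hv⟩
    set S := ∑ q, v q with hS
    set W := ∑ q, w q * v q with hW
    have e : ∀ p, (1 / 2 * S) * w p + 1 / 2 * W = lam * v p := fun p => by
      have h1 := hmul v p
      rw [hv] at h1
      simp only [Pi.smul_apply, smul_eq_mul] at h1
      rw [h1]; ring
    have e1 : (1 / 2 * S) * k + (1 / 2 * W) * N = lam * S := by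
      rw [← hlin1]
      conv_rhs => rw [hS, Finset.mul_sum]
      exact Finset.sum_congr rfl fun q _ => e q
    have e2 : (1 / 2 * S) * Q + (1 / 2 * W) * k = lam * W := by
      rw [← hlin2]
      conv_rhs => rw [hW, Finset.mul_sum]
      exact Finset.sum_congr rfl fun q _ => by rw [e q]; ring
    have hS0 : S ≠ 0 := by
      intro hS0
      have hW0 : W = 0 := by
        rw [hS0] at e1
        have : W * N = 0 := by linarith
        exact (mul_eq_zero.mp this).resolve_right hNpos.ne'
      apply hv0
      funext p
      have := e p
      rw [hS0, hW0] at this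
      have h3 : lam * v p = 0 := by linarith
      exact (mul_eq_zero.mp h3).resolve_left h0
    have f1 : (2 * lam - k) * S = N * W := by linarith
    have f2 : (2 * lam - k) * W = Q * S := by linarith
    have f3 : ((2 * lam - k) ^ 2 - s ^ 2) * S = 0 := by
      rw [hss]
      linear_combination (2 * lam - k) * f1 + N * f2
    have f4 := (mul_eq_zero.mp f3).resolve_right hS0
    have f5 : (2 * lam - k - s) * (2 * lam - k + s) = 0 := by linarith
    rcases mul_eq_zero.mp f5 with h | h
    · left; linarith
    · right; linarith
  have htop : IsEigenvalue E ((k + s) / 2) := by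
    refine ⟨fun p => N * w p + s, ?_, ?_⟩
    · intro h
      have := congrFun h p0
      have h1 := mul_pos hNpos (hwpos p0)
      simp only [Pi.zero_apply] at this
      linarith
    · funext p
      rw [hmul, hlin1, hlin2]
      simp only [Pi.smul_apply, smul_eq_mul]
      linear_combination (-1 / 2) * hss
  have hmax : ∀ lam : ℝ, IsEigenvalue E lam → (∀ μ : ℝ, IsEigenvalue E μ → |μ| ≤ |lam|) →
      lam = (k + s) / 2 := by
    intro lam hl hm
    have h1 := hm _ htop
    rw [abs_of_pos (by linarith : (0 : ℝ) < (k + s) / 2)] at h1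
    have h0 : lam ≠ 0 := by
      rintro rfl
      rw [abs_zero] at h1
      linarith
    rcases hchar lam h0 hl with h | h
    · exact h
    · rw [h, abs_of_nonpos (by linarith)] at h1
      linarith
  refine ⟨?_, ?_, ?_, ?_⟩
  · have hle : E.rank ≤ 2 := by
      have hEq : E = (Matrix.of fun p (i : Fin 2) => if i = 0 then 1 / 2 * w p else 1 / 2)
          * (Matrix.of fun (i : Fin 2) q => if i = 0 then 1 else w q) := by
        ext p q
        simp [hE, Matrix.mul_apply, Fin.sum_univ_two, hw]; ring
      rw [hEq]
      refine (Matrix.rank_mul_le_left _ _).trans ?_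
      simpa using Matrix.rank_le_card_width
        (Matrix.of fun p (i : Fin 2) => if i = 0 then 1 / 2 * w p else 1 / 2)
    have hne : E.rank ≠ 0 := by
      intro h
      rw [Matrix.rank, Submodule.finrank_eq_zero, LinearMap.range_eq_bot] at h
      have h2 := hmul w p0
      have h4 : E *ᵥ w = 0 := by rw [← Matrix.mulVecLin_apply, h]; rfl
      have h5 : ∑ q, w q * w q = Q := Finset.sum_congr rfl fun q _ => (pow_two _).symm
      rw [h4, hsw, h5, Pi.zero_apply] at h2
      have h3 := mul_pos hkR (hwpos p0)
      linarith
    omega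
  · intro lam hl hm
    rw [hmax lam hl hm]; linarith
  · intro _ lam μ hl hμ hm h0 hne
    have h1 := hmax lam hl hm
    rcases hchar μ h0 hμ with h | h
    · exact absurd (h.trans h1.symm) hne
    · have : μ ≤ 0 := by rw [h]; linarith
      exact lt_of_le_of_ne this h0
  · rintro lam v h0 ⟨_, hv⟩
    set S := ∑ q, v q with hS
    set W := ∑ q, w q * v q with hW
    have hveq : v = ∑ a : Fin k,
        (lam⁻¹ * (1 / 2 * (S * (n a : ℝ)⁻¹ + W))) • indicator (k := k) (n := n) a := by
      funext p
      have h1 := hmul v p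
      rw [hv] at h1
      simp only [Pi.smul_apply, smul_eq_mul] at h1
      simp only [Finset.sum_apply, Pi.smul_apply, smul_eq_mul, indicator, mul_ite, mul_one,
        mul_zero, Finset.sum_ite_eq, Finset.mem_univ, if_true]
      rw [eq_inv_mul_iff_mul_eq₀ h0]
      exact h1
    rw [hveq]
    exact Submodule.sum_mem _ fun a _ => Submodule.smul_mem _ _ (Submodule.subset_span ⟨a, rfl⟩)
end

section
/- Let x_1,…,x_N ∈ ℝ^m be partitioned into k clusters of sizes n_1,…,n_k and set X := Σ_{a=1}^k (1/n_a)·1_a 1_aᵀ. Define M, z, u, ρ, B as in the context and assume ρ_{(a,b)} > 0 for all a ≠ b. If P_{Λ⊥}(B − M)P_{Λ⊥} ⪯ z·P_{Λ⊥} (as quadratic forms), then X solves the k-means SDP. -/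
open scoped BigOperators
open Matrix

namespace Stmt2

/-- Index type for `N` points partitioned into `k` clusters of sizes `n 0, …, n (k−1)`. -/
abbrev Idx (k : ℕ) (n : Fin k → ℕ) := (a : Fin k) × Fin (n a)

variable {m k : ℕ} {n : Fin k → ℕ}

/-- The matrix of squared pairwise distances `D_{pq} = ‖x_p − x_q‖₂²`. -/
noncomputable def sqDist (x : Idx k n → EuclideanSpace ℝ (Fin m)) :
    Matrix (Idx k n) (Idx k n) ℝ :=
  fun p q => ‖x p - x q‖ ^ 2

/-- Feasibility for the k-means SDP. -/
def SDPFeasible (X : Matrix (Idx k n) (Idx k n) ℝ) : Prop :=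
  X.trace = (k : ℝ) ∧ X *ᵥ (fun _ => (1 : ℝ)) = (fun _ => (1 : ℝ)) ∧
    (∀ p q, 0 ≤ X p q) ∧ X.PosSemidef

/-- `X` solves the k-means SDP for the points `x`. -/
noncomputable def SolvesSDP (x : Idx k n → EuclideanSpace ℝ (Fin m))
    (X : Matrix (Idx k n) (Idx k n) ℝ) : Prop :=
  SDPFeasible X ∧ ∀ Y : Matrix (Idx k n) (Idx k n) ℝ, SDPFeasible Y →
    (sqDist x * X).trace ≤ (sqDist x * Y).trace

/-- The correction term `φ(p) = (1/n_a²)·1ᵀD^{(a,a)}1 − (2/n_a)·e_pᵀD^{(a,a)}1`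
for `p` in cluster `a`, so that `M = D + (1/2)(φ1ᵀ + 1φᵀ)`. -/
noncomputable def phi (x : Idx k n → EuclideanSpace ℝ (Fin m)) (p : Idx k n) : ℝ :=
  ((n p.1 : ℝ) ^ 2)⁻¹ * (∑ i : Fin (n p.1), ∑ j : Fin (n p.1), sqDist x ⟨p.1, i⟩ ⟨p.1, j⟩)
    - (2 / (n p.1 : ℝ)) * ∑ j : Fin (n p.1), sqDist x p ⟨p.1, j⟩

/-- The matrix `M` of equation (7) in the paper. -/
noncomputable def Mmat (x : Idx k n → EuclideanSpace ℝ (Fin m)) :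
    Matrix (Idx k n) (Idx k n) ℝ :=
  fun p q => sqDist x p q + phi x p / 2 + phi x q / 2

/-- The row sums of the block `M^{(a,b)}`, i.e. the vector `M^{(a,b)}1 ∈ ℝ^{n_a}`. -/
noncomputable def Mrow (x : Idx k n → EuclideanSpace ℝ (Fin m)) (a b : Fin k)
    (i : Fin (n a)) : ℝ :=
  ∑ j : Fin (n b), Mmat x ⟨a, i⟩ ⟨b, j⟩

/-- The vector `u_{(a,b)} = M^{(a,b)}1 − z·((n_a + n_b)/(2n_a))·1`. -/
noncomputable def uvec (x : Idx k n → EuclideanSpace ℝ (Fin m)) (z : ℝ) (a b : Fin k)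
    (i : Fin (n a)) : ℝ :=
  Mrow x a b i - z * (((n a : ℝ) + (n b : ℝ)) / (2 * (n a : ℝ)))

/-- The scalar `ρ_{(a,b)} = u_{(a,b)}ᵀ1`. -/
noncomputable def rho (x : Idx k n → EuclideanSpace ℝ (Fin m)) (z : ℝ) (a b : Fin k) : ℝ :=
  ∑ i : Fin (n a), uvec x z a b i

/-- The dual-certificate matrix `B`, with blocks
`B^{(a,b)} = (1/ρ_{(b,a)})·u_{(a,b)}u_{(b,a)}ᵀ` for `a ≠ b` and `B^{(a,a)} = 0`. -/
noncomputable def Bmat (x : Idx k n → EuclideanSpace ℝ (Fin m)) (z : ℝ) :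
    Matrix (Idx k n) (Idx k n) ℝ :=
  fun p q => if p.1 = q.1 then 0
    else (rho x z q.1 p.1)⁻¹ * uvec x z p.1 q.1 p.2 * uvec x z q.1 p.1 q.2

/-- The orthogonal projection `P_{Λ⊥} = I − Σ_a (1/n_a)·1_a1_aᵀ` onto the orthogonal
complement of the span of the cluster indicators. -/
noncomputable def Pperp (k : ℕ) (n : Fin k → ℕ) : Matrix (Idx k n) (Idx k n) ℝ :=
  fun p q => (if p = q then 1 else 0) - (if p.1 = q.1 then ((n p.1 : ℝ))⁻¹ else 0)

end Stmt2

open Stmt2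


namespace Stmt2

variable {m k : ℕ} {n : Fin k → ℕ}

noncomputable def Xm (k : ℕ) (n : Fin k → ℕ) : Matrix (Idx k n) (Idx k n) ℝ :=
  fun p q => if p.1 = q.1 then ((n p.1 : ℝ))⁻¹ else 0

lemma mul_Xm (A : Matrix (Idx k n) (Idx k n) ℝ) (p q : Idx k n) :
    (A * Xm k n) p q = (n q.1 : ℝ)⁻¹ * ∑ j : Fin (n q.1), A p ⟨q.1, j⟩ := by
  rw [Matrix.mul_apply, Fintype.sum_sigma, Finset.sum_eq_single q.1]
  · simp [Xm, Finset.mul_sum, mul_comm]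
  · intro b _ hb
    simp [Xm, hb]
  · simp

lemma Xm_transpose : (Xm k n)ᵀ = Xm k n := by
  ext p q
  simp only [Matrix.transpose_apply, Xm]
  by_cases h : p.1 = q.1
  · simp [h]
  · simp [h, Ne.symm h]

lemma Xm_mul_Xm (hn : ∀ a, 0 < n a) : Xm k n * Xm k n = Xm k n := by
  ext p q
  have h : (n q.1 : ℝ) ≠ 0 := by exact_mod_cast (hn q.1).ne'
  rw [mul_Xm]
  simp only [Xm]
  by_cases h' : p.1 = q.1
  · simp [h', h]
  · simp [h']

lemma Pperp_eq : Pperp k n = 1 - Xm k n := by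
  ext p q
  simp [Pperp, Xm, Matrix.one_apply]

lemma Xm_feasible (hn : ∀ a, 0 < n a) : SDPFeasible (Xm k n) := by
  have h0 : ∀ a, (n a : ℝ) ≠ 0 := fun a => by exact_mod_cast (hn a).ne'
  refine ⟨?_, ?_, ?_, ?_⟩
  · rw [Matrix.trace, Fintype.sum_sigma]
    simp [Xm, h0]
  · ext p
    rw [Matrix.mulVec, dotProduct, Fintype.sum_sigma, Finset.sum_eq_single p.1]
    · simp [Xm, h0]
    · intro b _ hb
      simp [Xm, Ne.symm hb]
    · simp
  · intro p q
    simp only [Xm]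
    split_ifs <;> positivity
  · have h := Matrix.posSemidef_conjTranspose_mul_self (Xm k n)
    rwa [Matrix.conjTranspose_eq_transpose_of_trivial, Xm_transpose, Xm_mul_Xm hn] at h

lemma sqDist_comm (x : Idx k n → EuclideanSpace ℝ (Fin m)) (p q : Idx k n) :
    sqDist x p q = sqDist x q p := by
  simp [sqDist, norm_sub_rev]

lemma Mmat_comm (x : Idx k n → EuclideanSpace ℝ (Fin m)) (p q : Idx k n) :
    Mmat x p q = Mmat x q p := by
  simp only [Mmat]; rw [sqDist_comm]; ring

lemma rho_comm (hn : ∀ a, 0 < n a) (x : Idx k n → EuclideanSpace ℝ (Fin m)) (z : ℝ)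
    (a b : Fin k) : rho x z a b = rho x z b a := by
  have h0 : ∀ a, (n a : ℝ) ≠ 0 := fun a => by exact_mod_cast (hn a).ne'
  have ha := h0 a
  have hb := h0 b
  simp only [rho, uvec, Mrow, Finset.sum_sub_distrib]
  rw [Finset.sum_comm]
  congr 1
  · simp only [fun i j => Mmat_comm x (⟨a, i⟩ : Idx k n) ⟨b, j⟩]
  · simp; field_simp; ring

lemma Bmat_comm (hn : ∀ a, 0 < n a) (x : Idx k n → EuclideanSpace ℝ (Fin m)) (z : ℝ)
    (p q : Idx k n) : Bmat x z p q = Bmat x z q p := by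
  simp only [Bmat]
  by_cases h : p.1 = q.1
  · simp [h]
  · rw [if_neg h, if_neg (Ne.symm h), rho_comm hn x z q.1 p.1]; ring

lemma Mrow_self (hn : ∀ a, 0 < n a) (x : Idx k n → EuclideanSpace ℝ (Fin m)) (a : Fin k)
    (i : Fin (n a)) : Mrow x a a i = 0 := by
  have ha : (n a : ℝ) ≠ 0 := by exact_mod_cast (hn a).ne'
  obtain ⟨S, hS⟩ : ∃ S : Fin (n a) → ℝ, ∀ i, S i = ∑ j : Fin (n a), sqDist x ⟨a, i⟩ ⟨a, j⟩ :=
    ⟨_, fun _ => rfl⟩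
  have hphi : ∀ j : Fin (n a), phi x ⟨a, j⟩
      = ((n a : ℝ) ^ 2)⁻¹ * (∑ i, S i) - (2 / (n a : ℝ)) * S j := by
    intro j
    simp only [hS]
    rfl
  simp only [Mrow, Mmat, hphi, Finset.sum_add_distrib, ← Finset.sum_div, Finset.sum_sub_distrib,
    ← Finset.mul_sum, Finset.sum_const, Finset.card_univ, Fintype.card_fin, nsmul_eq_mul, ← hS]
  field_simp
  ring

noncomputable def Em (k : ℕ) (n : Fin k → ℕ) (z : ℝ) : Matrix (Idx k n) (Idx k n) ℝ :=
  fun p q => z / 2 * ((n p.1 : ℝ)⁻¹ + (n q.1 : ℝ)⁻¹)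

noncomputable def Qm (x : Idx k n → EuclideanSpace ℝ (Fin m)) (z : ℝ) :
    Matrix (Idx k n) (Idx k n) ℝ :=
  z • (1 : Matrix (Idx k n) (Idx k n) ℝ) - (Bmat x z - Mmat x) - Em k n z

lemma Em_mul (hn : ∀ a, 0 < n a) (z : ℝ) : Em k n z * Xm k n = Em k n z := by
  ext p q
  have h : (n q.1 : ℝ) ≠ 0 := by exact_mod_cast (hn q.1).ne'
  rw [mul_Xm]
  simp [Em, h]

lemma Qm_mul (hn : ∀ a, 0 < n a) (x : Idx k n → EuclideanSpace ℝ (Fin m)) (z : ℝ)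
    (hρ : ∀ a b : Fin k, a ≠ b → 0 < rho x z a b) : Qm x z * Xm k n = 0 := by
  have h0 : ∀ a, (n a : ℝ) ≠ 0 := fun a => by exact_mod_cast (hn a).ne'
  ext p q
  obtain ⟨a, i⟩ := p
  obtain ⟨b, j⟩ := q
  rw [Qm, Matrix.sub_mul, Matrix.sub_mul, Matrix.sub_mul, Em_mul hn, Matrix.smul_mul,
    Matrix.one_mul]
  simp only [Matrix.sub_apply, Matrix.smul_apply, mul_Xm, Matrix.zero_apply, smul_eq_mul]
  have hM : ∑ j : Fin (n b), Mmat x ⟨a, i⟩ ⟨b, j⟩ = Mrow x a b i := rfl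
  rw [hM]
  have ha := h0 a
  have hb := h0 b
  by_cases hab : a = b
  · subst hab
    rw [Mrow_self hn]
    simp [Bmat, Em, Xm]
    ring
  · have hB : ∑ j : Fin (n b), Bmat x z ⟨a, i⟩ ⟨b, j⟩ = uvec x z a b i := by
      have hr : rho x z b a ≠ 0 := (hρ b a (Ne.symm hab)).ne'
      simp only [Bmat, if_neg hab]
      rw [← Finset.mul_sum]
      change (rho x z b a)⁻¹ * uvec x z a b i * rho x z b a = _
      field_simp
    rw [hB]
    simp only [Xm, if_neg hab, uvec, Em]
    field_simp
    ring

lemma Qm_transpose (hn : ∀ a, 0 < n a) (x : Idx k n → EuclideanSpace ℝ (Fin m)) (z : ℝ) :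
    (Qm x z)ᵀ = Qm x z := by
  ext p q
  simp only [Matrix.transpose_apply, Qm, Matrix.sub_apply, Matrix.smul_apply, Em]
  rw [Bmat_comm hn, Mmat_comm, Matrix.one_apply, Matrix.one_apply, add_comm (n q.1 : ℝ)⁻¹]
  simp only [eq_comm]

lemma Qm_eq (hn : ∀ a, 0 < n a) (x : Idx k n → EuclideanSpace ℝ (Fin m)) (z : ℝ)
    (hρ : ∀ a b : Fin k, a ≠ b → 0 < rho x z a b) :
    Qm x z = z • Pperp k n - Pperp k n * (Bmat x z - Mmat x) * Pperp k n := by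
  have hQX := Qm_mul hn x z hρ
  have hXQ : Xm k n * Qm x z = 0 := by
    have := congrArg Matrix.transpose hQX
    rwa [Matrix.transpose_mul, Xm_transpose, Qm_transpose hn, Matrix.transpose_zero] at this
  have h1 : Pperp k n * Qm x z * Pperp k n = Qm x z := by
    rw [Pperp_eq, Matrix.sub_mul, hXQ, Matrix.mul_sub, sub_zero, Matrix.one_mul, hQX, sub_zero,
      Matrix.mul_one]
  have hPP : Pperp k n * Pperp k n = Pperp k n := by
    rw [Pperp_eq, Matrix.mul_sub, Matrix.sub_mul, Matrix.sub_mul, Xm_mul_Xm hn]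
    simp
  have hE : Em k n z * Pperp k n = 0 := by
    rw [Pperp_eq, Matrix.mul_sub, Em_mul hn, Matrix.mul_one, sub_self]
  rw [← h1]
  conv_lhs => rw [Qm]
  rw [Matrix.mul_sub, Matrix.sub_mul, Matrix.mul_assoc _ (Em k n z), hE, Matrix.mul_zero, sub_zero,
    Matrix.mul_sub, Matrix.sub_mul, Matrix.mul_smul, Matrix.mul_one, Matrix.smul_mul, hPP]

lemma trace_mul_nonneg' {ι : Type*} [Fintype ι] [DecidableEq ι] {A Y : Matrix ι ι ℝ}
    (hA : A.PosSemidef) (hY : Y.PosSemidef) : 0 ≤ (A * Y).trace := by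
  obtain ⟨r, v, rfl⟩ := Matrix.posSemidef_iff_eq_sum_vecMulVec.mp hA
  rw [Matrix.sum_mul, Matrix.trace_sum]
  refine Finset.sum_nonneg fun i _ => ?_
  have h := hY.dotProduct_mulVec_nonneg (v i)
  rw [Matrix.vecMulVec_mul, Matrix.trace_vecMulVec]
  rw [Matrix.dotProduct_mulVec, dotProduct_comm] at h
  exact h

/-- Decomposition of the objective. -/
lemma trace_eq (x : Idx k n → EuclideanSpace ℝ (Fin m)) (z : ℝ)
    (Y : Matrix (Idx k n) (Idx k n) ℝ) (hY : SDPFeasible Y) :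
    (sqDist x * Y).trace = (Qm x z * Y).trace + (Bmat x z * Y).trace
      - z * k - ∑ p, (phi x p - z * (n p.1 : ℝ)⁻¹) := by
  obtain ⟨htr, hrow, -, hpsd⟩ := hY
  have hsym : ∀ p q, Y p q = Y q p := fun p q => by
    have := hpsd.1.apply p q
    simpa using this.symm
  have hr : ∀ p, ∑ q, Y p q = 1 := fun p => by
    have := congrFun hrow p
    simpa [Matrix.mulVec, dotProduct] using this
  have hc : ∀ q, ∑ p, Y p q = 1 := fun q => by
    rw [← hr q]; exact Finset.sum_congr rfl fun p _ => hsym p q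
  have hQ : Qm x z = z • (1 : Matrix (Idx k n) (Idx k n) ℝ) - Bmat x z + sqDist x
      + Matrix.of (fun p q => (phi x p - z * (n p.1 : ℝ)⁻¹) / 2
        + (phi x q - z * (n q.1 : ℝ)⁻¹) / 2) := by
    ext p q
    simp [Qm, Mmat, Em]
    ring
  have hF : ∀ f : Idx k n → ℝ, ((Matrix.of fun p q => f p / 2 + f q / 2) * Y).trace
      = ∑ p, f p := by
    intro f
    simp only [Matrix.trace, Matrix.diag_apply, Matrix.mul_apply, Matrix.of_apply, add_mul,
      Finset.sum_add_distrib]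
    simp only [← Finset.mul_sum, hc]
    rw [Finset.sum_comm]
    simp only [← Finset.mul_sum, hr]
    rw [← Finset.sum_add_distrib]
    exact Finset.sum_congr rfl fun p _ => by ring
  rw [hQ, Matrix.add_mul, Matrix.add_mul, Matrix.sub_mul, Matrix.smul_mul, Matrix.one_mul,
    Matrix.trace_add, Matrix.trace_add, Matrix.trace_sub, Matrix.trace_smul, htr, 
    hF (fun p => phi x p - z * (n p.1 : ℝ)⁻¹), smul_eq_mul]
  ring

end Stmt2

/-- (Theorem 2.4 of the paper.) With `M`, `z`, `u`, `ρ`, `B` as above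
and `ρ_{(a,b)} > 0` for all `a ≠ b`, if `P_{Λ⊥}(B − M)P_{Λ⊥} ⪯ z·P_{Λ⊥}`, then
`X = Σ_a (1/n_a)·1_a1_aᵀ` solves the k-means SDP. -/
theorem dual_certificate_implies_SDP_optimal
    (m k : ℕ) (hk : 1 < k) (n : Fin k → ℕ) (hn : ∀ a, 0 < n a)
    (x : Idx k n → EuclideanSpace ℝ (Fin m))
    (X : Matrix (Idx k n) (Idx k n) ℝ)
    (hX : X = fun p q => if p.1 = q.1 then ((n p.1 : ℝ))⁻¹ else 0)
    (z : ℝ)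
    (hz : IsLeast {t : ℝ | ∃ (a b : Fin k) (i : Fin (n a)), a ≠ b ∧
      t = (2 * (n a : ℝ) / ((n a : ℝ) + (n b : ℝ))) * Mrow x a b i} z)
    (hρ : ∀ a b : Fin k, a ≠ b → 0 < rho x z a b)
    (hcert : (z • Pperp k n - Pperp k n * (Bmat x z - Mmat x) * Pperp k n).PosSemidef) :
    SolvesSDP x X := by
  have hX' : X = Xm k n := hX
  subst hX'
  refine ⟨Xm_feasible hn, fun Y hY => ?_⟩
  have h1 := trace_eq x z (Xm k n) (Xm_feasible hn)
  have h2 := trace_eq x z Y hY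
  have hQX := Qm_mul hn x z hρ
  rw [hQX, Matrix.trace_zero] at h1
  have hBX : (Bmat x z * Xm k n).trace = 0 := by
    rw [Matrix.trace]
    refine Finset.sum_eq_zero fun p _ => ?_
    rw [Matrix.diag_apply, mul_Xm]
    simp [Bmat]
  have hQY : 0 ≤ (Qm x z * Y).trace := by
    refine trace_mul_nonneg' ?_ hY.2.2.2
    rw [Qm_eq hn x z hρ]; exact hcert
  have hu : ∀ a b : Fin k, a ≠ b → ∀ i, 0 ≤ uvec x z a b i := by
    intro a b hab i
    have ha : (0 : ℝ) < n a := by exact_mod_cast hn a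
    have hb : (0 : ℝ) < n b := by exact_mod_cast hn b
    have h := hz.2 ⟨a, b, i, hab, rfl⟩
    have h3 := mul_le_mul_of_nonneg_right h
      (show 0 ≤ ((n a : ℝ) + (n b : ℝ)) / (2 * (n a : ℝ)) by positivity)
    have h4 : 2 * (n a : ℝ) / ((n a : ℝ) + (n b : ℝ)) * Mrow x a b i
        * (((n a : ℝ) + (n b : ℝ)) / (2 * (n a : ℝ))) = Mrow x a b i := by
      field_simp
    rw [h4] at h3
    simp only [uvec]; linarith
  have hBY : 0 ≤ (Bmat x z * Y).trace := by
    rw [Matrix.trace]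
    refine Finset.sum_nonneg fun p _ => ?_
    rw [Matrix.diag_apply, Matrix.mul_apply]
    refine Finset.sum_nonneg fun q _ => mul_nonneg ?_ (hY.2.2.1 q p)
    simp only [Bmat]
    split_ifs with h
    · exact le_rfl
    · exact mul_nonneg (mul_nonneg (inv_nonneg.2 (hρ _ _ (Ne.symm h)).le) (hu _ _ h _))
        (hu _ _ (Ne.symm h) _)
  rw [hBX] at h1
  linarith
end

section
/- Let x_1,…,x_N ∈ ℝ^m be partitioned into k clusters of sizes n_1,…,n_k and set X := Σ_{a=1}^k (1/n_a)·1_a 1_aᵀ. Let Ψ be the m×N matrix whose column corresponding to a point x in cluster a is x − c_a, where c_a is the average of the points in cluster a. Define M, z, u, ρ as in the context and assume ρ_{(a,b)} > 0 for all a ≠ b. If 2‖Ψ‖²_{2→2} + Σ_{a=1}^k Σ_{b=a+1}^k ‖P_{1⊥}M^{(a,b)}1‖₂·‖P_{1⊥}M^{(b,a)}1‖₂ / ρ_{(a,b)} ≤ z, then X solves the k-means SDP. -/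
open scoped BigOperators
open Matrix

namespace Stmt3

/-- Index type for `N` points partitioned into `k` clusters of sizes `n 0, …, n (k−1)`. -/
abbrev Idx (k : ℕ) (n : Fin k → ℕ) := (a : Fin k) × Fin (n a)

variable {m k : ℕ} {n : Fin k → ℕ}

/-- The matrix of squared pairwise distances `D_{pq} = ‖x_p − x_q‖₂²`. -/
noncomputable def sqDist (x : Idx k n → EuclideanSpace ℝ (Fin m)) :
    Matrix (Idx k n) (Idx k n) ℝ :=
  fun p q => ‖x p - x q‖ ^ 2

/-- Feasibility for the k-means SDP. -/
def SDPFeasible (X : Matrix (Idx k n) (Idx k n) ℝ) : Prop :=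
  X.trace = (k : ℝ) ∧ X *ᵥ (fun _ => (1 : ℝ)) = (fun _ => (1 : ℝ)) ∧
    (∀ p q, 0 ≤ X p q) ∧ X.PosSemidef

/-- `X` solves the k-means SDP for the points `x`. -/
noncomputable def SolvesSDP (x : Idx k n → EuclideanSpace ℝ (Fin m))
    (X : Matrix (Idx k n) (Idx k n) ℝ) : Prop :=
  SDPFeasible X ∧ ∀ Y : Matrix (Idx k n) (Idx k n) ℝ, SDPFeasible Y →
    (sqDist x * X).trace ≤ (sqDist x * Y).trace

/-- The correction term `φ(p) = (1/n_a²)·1ᵀD^{(a,a)}1 − (2/n_a)·e_pᵀD^{(a,a)}1`. -/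
noncomputable def phi (x : Idx k n → EuclideanSpace ℝ (Fin m)) (p : Idx k n) : ℝ :=
  ((n p.1 : ℝ) ^ 2)⁻¹ * (∑ i : Fin (n p.1), ∑ j : Fin (n p.1), sqDist x ⟨p.1, i⟩ ⟨p.1, j⟩)
    - (2 / (n p.1 : ℝ)) * ∑ j : Fin (n p.1), sqDist x p ⟨p.1, j⟩

/-- The matrix `M = D + (1/2)(φ1ᵀ + 1φᵀ)`. -/
noncomputable def Mmat (x : Idx k n → EuclideanSpace ℝ (Fin m)) :
    Matrix (Idx k n) (Idx k n) ℝ :=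
  fun p q => sqDist x p q + phi x p / 2 + phi x q / 2

/-- The vector `M^{(a,b)}1 ∈ ℝ^{n_a}`. -/
noncomputable def Mrow (x : Idx k n → EuclideanSpace ℝ (Fin m)) (a b : Fin k)
    (i : Fin (n a)) : ℝ :=
  ∑ j : Fin (n b), Mmat x ⟨a, i⟩ ⟨b, j⟩

/-- The vector `u_{(a,b)} = M^{(a,b)}1 − z·((n_a + n_b)/(2n_a))·1`. -/
noncomputable def uvec (x : Idx k n → EuclideanSpace ℝ (Fin m)) (z : ℝ) (a b : Fin k)
    (i : Fin (n a)) : ℝ :=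
  Mrow x a b i - z * (((n a : ℝ) + (n b : ℝ)) / (2 * (n a : ℝ)))

/-- The scalar `ρ_{(a,b)} = u_{(a,b)}ᵀ1`. -/
noncomputable def rho (x : Idx k n → EuclideanSpace ℝ (Fin m)) (z : ℝ) (a b : Fin k) : ℝ :=
  ∑ i : Fin (n a), uvec x z a b i

/-- The empirical center of cluster `a`. -/
noncomputable def center (x : Idx k n → EuclideanSpace ℝ (Fin m)) (a : Fin k) :
    EuclideanSpace ℝ (Fin m) :=
  ((n a : ℝ))⁻¹ • ∑ i : Fin (n a), x ⟨a, i⟩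

/-- The `m × N` matrix `Ψ` whose column for the point `x_{a,i}` is `x_{a,i} − c_a`. -/
noncomputable def Psi (x : Idx k n → EuclideanSpace ℝ (Fin m)) :
    Matrix (Fin m) (Idx k n) ℝ :=
  fun t p => (x p - center x p.1) t

/-- The spectral norm (`2→2` operator norm) of a rectangular matrix. -/
noncomputable def specNorm {α β : Type*} [Fintype α] [Fintype β] [DecidableEq β]
    (A : Matrix α β ℝ) : ℝ :=
  ‖LinearMap.toContinuousLinearMap (Matrix.toEuclideanLin A)‖

/-- The Euclidean norm `‖P_{1⊥} M^{(a,b)}1‖₂` of the projection of `M^{(a,b)}1`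
onto the orthogonal complement of the all-ones vector. -/
noncomputable def MrowPerpNorm (x : Idx k n → EuclideanSpace ℝ (Fin m)) (a b : Fin k) : ℝ :=
  Real.sqrt (∑ i : Fin (n a),
    (Mrow x a b i - (∑ j : Fin (n a), Mrow x a b j) / (n a : ℝ)) ^ 2)

end Stmt3

open Stmt3

section helpers

theorem aux_center_sum {E : Type*} [NormedAddCommGroup E] [InnerProductSpace ℝ E] {N : ℕ}
    (hN : 0 < N) (y : Fin N → E) (c : E) (hc : c = (N : ℝ)⁻¹ • ∑ i, y i) :
    ∑ i, (y i - c) = 0 := by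
  have : (N : ℝ) ≠ 0 := by positivity
  rw [Finset.sum_sub_distrib, hc]
  simp only [Finset.sum_const, Finset.card_univ, Fintype.card_fin]
  rw [← Nat.cast_smul_eq_nsmul ℝ, smul_smul, mul_inv_cancel₀ this, one_smul, sub_self]

theorem aux_var {E : Type*} [NormedAddCommGroup E] [InnerProductSpace ℝ E] {N : ℕ}
    (hN : 0 < N) (y : Fin N → E) (c : E) (hc : c = (N : ℝ)⁻¹ • ∑ i, y i) (w : E) :
    ∑ j, ‖w - y j‖ ^ 2 = N * ‖w - c‖ ^ 2 + ∑ j, ‖y j - c‖ ^ 2 := by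
  have h0 := aux_center_sum hN y c hc
  have h1 : ∀ j, ‖w - y j‖ ^ 2 = ‖w - c‖ ^ 2 + ‖y j - c‖ ^ 2 - 2 * inner ℝ (w - c) (y j - c) := by
    intro j
    have : w - y j = (w - c) - (y j - c) := by abel
    rw [this, norm_sub_sq_real]; ring
  simp only [h1, Finset.sum_add_distrib, Finset.sum_sub_distrib]
  rw [← Finset.mul_sum, ← inner_sum, h0]
  simp

variable {m k : ℕ} {n : Fin k → ℕ}

theorem aux_phi (hn : ∀ a, 0 < n a) (x : Idx k n → EuclideanSpace ℝ (Fin m)) (p : Idx k n) :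
    phi x p = -2 * ‖x p - center x p.1‖ ^ 2 := by
  have hN : (n p.1 : ℝ) ≠ 0 := by have := hn p.1; positivity
  unfold phi sqDist
  have h := aux_var (hn p.1) (fun i => x ⟨p.1, i⟩) (center x p.1) rfl
  simp only [h, Finset.sum_add_distrib, ← Finset.mul_sum, Finset.sum_const, Finset.card_univ,
    Fintype.card_fin, nsmul_eq_mul]
  field_simp
  ring

theorem aux_M (hn : ∀ a, 0 < n a) (x : Idx k n → EuclideanSpace ℝ (Fin m)) (p q : Idx k n) :
    Mmat x p q = -2 * inner ℝ (x p - center x p.1) (x q - center x q.1)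
      + (2 * inner ℝ (x p - center x p.1) (center x p.1 - center x q.1)
          + ‖center x p.1 - center x q.1‖ ^ 2)
      - 2 * inner ℝ (x q - center x q.1) (center x p.1 - center x q.1) := by
  unfold Mmat sqDist
  rw [aux_phi hn, aux_phi hn]
  have : x p - x q = (x p - center x p.1) - (x q - center x q.1)
    + (center x p.1 - center x q.1) := by abel
  rw [this, norm_add_sq_real, norm_sub_sq_real,
    inner_sub_left (x p - center x p.1) (x q - center x q.1)]
  ring

theorem aux_M_symm (x : Idx k n → EuclideanSpace ℝ (Fin m)) (p q : Idx k n) :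
    Mmat x p q = Mmat x q p := by
  unfold Mmat sqDist
  rw [norm_sub_rev]; ring

theorem aux_Mrow_diag (hn : ∀ a, 0 < n a) (x : Idx k n → EuclideanSpace ℝ (Fin m)) (a : Fin k)
    (i : Fin (n a)) : Mrow x a a i = 0 := by
  unfold Mrow
  simp only [aux_M hn, sub_self, inner_zero_right, norm_zero]
  have := aux_center_sum (hn a) (fun i => x ⟨a, i⟩) (center x a) rfl
  simp only [mul_zero, sub_zero, ne_eq, OfNat.ofNat_ne_zero, not_false_eq_true, zero_pow, add_zero]
  rw [← Finset.mul_sum, ← inner_sum, this]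
  simp

theorem aux_rho_symm (hn : ∀ a, 0 < n a) (x : Idx k n → EuclideanSpace ℝ (Fin m)) (z : ℝ)
    (a b : Fin k) : rho x z a b = rho x z b a := by
  have ha : (n a : ℝ) ≠ 0 := by have := hn a; positivity
  have hb : (n b : ℝ) ≠ 0 := by have := hn b; positivity
  unfold rho uvec Mrow
  simp only [Finset.sum_sub_distrib, Finset.sum_const, Finset.card_univ, Fintype.card_fin,
    nsmul_eq_mul]
  rw [Finset.sum_comm]
  congr 1
  · exact Finset.sum_congr rfl fun _ _ => Finset.sum_congr rfl fun _ _ => aux_M_symm x _ _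
  · field_simp; ring

noncomputable def auxB (x : Idx k n → EuclideanSpace ℝ (Fin m)) (z : ℝ) (p q : Idx k n) : ℝ :=
  if p.1 = q.1 then 0 else uvec x z p.1 q.1 p.2 * uvec x z q.1 p.1 q.2 / rho x z p.1 q.1

noncomputable def auxC (n : Fin k → ℕ) (z : ℝ) (p q : Idx k n) : ℝ :=
  z / 2 * ((n p.1 : ℝ)⁻¹ + (n q.1 : ℝ)⁻¹)

noncomputable def auxQ (x : Idx k n → EuclideanSpace ℝ (Fin m)) (z : ℝ) (p q : Idx k n) : ℝ :=
  Mmat x p q - auxB x z p q - auxC n z p q + if p = q then z else 0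

theorem auxQ_symm (hn : ∀ a, 0 < n a) (x : Idx k n → EuclideanSpace ℝ (Fin m)) (z : ℝ)
    (p q : Idx k n) : auxQ x z p q = auxQ x z q p := by
  unfold auxQ auxC auxB
  rw [aux_M_symm, aux_rho_symm hn x z p.1 q.1]
  simp only [eq_comm (a := p) (b := q), eq_comm (a := p.1) (b := q.1)]
  rw [mul_comm (uvec x z p.1 q.1 p.2), add_comm (n p.1 : ℝ)⁻¹]

theorem auxQ_row (hn : ∀ a, 0 < n a) (x : Idx k n → EuclideanSpace ℝ (Fin m)) (z : ℝ)
    (hρ : ∀ a b : Fin k, a ≠ b → 0 < rho x z a b)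
    (p : Idx k n) (b : Fin k) : ∑ j, auxQ x z p ⟨b, j⟩ = 0 := by
  obtain ⟨a, i⟩ := p
  have ha : (n a : ℝ) ≠ 0 := by have := hn a; positivity
  have hb : (n b : ℝ) ≠ 0 := by have := hn b; positivity
  unfold auxQ auxC auxB
  simp only [Finset.sum_add_distrib, Finset.sum_sub_distrib]
  have hM : ∑ j, Mmat x ⟨a, i⟩ ⟨b, j⟩ = Mrow x a b i := rfl
  rw [hM]
  by_cases hab : a = b
  · subst hab
    rw [aux_Mrow_diag hn]
    simp
    field_simp
    ring
  · have hr : ∑ j, uvec x z b a j = rho x z a b := by rw [aux_rho_symm hn]; rfl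
    have h0 := (hρ a b hab).ne'
    have h1 : ∀ j : Fin (n b), ¬ ((⟨a, i⟩ : Idx k n) = ⟨b, j⟩) := by
      intro j h; exact hab (congrArg Sigma.fst h)
    simp only [hab, if_false, h1, Finset.sum_const_zero, ← Finset.sum_div, ← Finset.mul_sum, hr]
    unfold uvec
    simp
    field_simp
    ring

theorem aux_block_zero (F : Idx k n → Fin k → ℝ) (v : Idx k n → ℝ)
    (hv : ∀ a, ∑ i, v ⟨a, i⟩ = 0) :
    ∑ p, ∑ q : Idx k n, F p q.1 * v p * v q = 0 := by
  refine Finset.sum_eq_zero fun p _ => ?_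
  rw [Fintype.sum_sigma]
  refine Finset.sum_eq_zero fun b _ => ?_
  simp only [← Finset.mul_sum, hv, mul_zero]

theorem aux_M_form (hn : ∀ a, 0 < n a) (x : Idx k n → EuclideanSpace ℝ (Fin m))
    (v : Idx k n → ℝ) (hv : ∀ a, ∑ i, v ⟨a, i⟩ = 0) :
    ∑ p, ∑ q, Mmat x p q * v p * v q = -2 * ‖∑ p, v p • (x p - center x p.1)‖ ^ 2 := by
  have h1 := aux_block_zero (fun p b => (2 * inner ℝ (x p - center x p.1) (center x p.1 - center x b)
          + ‖center x p.1 - center x b‖ ^ 2)) v hv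
  have h2 := aux_block_zero (fun q a => 2 * inner ℝ (x q - center x q.1) (center x a - center x q.1))
    v hv
  rw [Finset.sum_comm] at h2
  have h3 : ‖∑ p, v p • (x p - center x p.1)‖ ^ 2 =
    ∑ p, ∑ q, v p * v q * inner ℝ (x p - center x p.1) (x q - center x q.1) := by
    rw [← real_inner_self_eq_norm_sq, sum_inner]
    refine Finset.sum_congr rfl fun p _ => ?_
    rw [inner_sum]
    refine Finset.sum_congr rfl fun q _ => ?_
    rw [real_inner_smul_left, real_inner_smul_right]; ring
  rw [h3]
  have : ∀ p q, Mmat x p q * v p * v q =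
      -2 * (v p * v q * inner ℝ (x p - center x p.1) (x q - center x q.1))
      + (2 * inner ℝ (x p - center x p.1) (center x p.1 - center x q.1)
          + ‖center x p.1 - center x q.1‖ ^ 2) * v p * v q
      - 2 * inner ℝ (x q - center x q.1) (center x p.1 - center x q.1) * v q * v p := by
    intro p q; rw [aux_M hn]; ring
  simp only [this, Finset.sum_add_distrib, Finset.sum_sub_distrib, ← Finset.mul_sum]
  linarith

theorem aux_Psi (x : Idx k n → EuclideanSpace ℝ (Fin m)) (v : Idx k n → ℝ) :
    ‖∑ p, v p • (x p - center x p.1)‖ ^ 2 ≤ specNorm (Psi x) ^ 2 * ∑ p, v p ^ 2 := by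
  have h := ContinuousLinearMap.le_opNorm
    (LinearMap.toContinuousLinearMap (Matrix.toEuclideanLin (Psi x))) (WithLp.toLp 2 v)
  have e : (LinearMap.toContinuousLinearMap (Matrix.toEuclideanLin (Psi x))) (WithLp.toLp 2 v)
      = ∑ p, v p • (x p - center x p.1) := by
    ext t
    simp [Matrix.mulVec, dotProduct, Psi, mul_comm]
  rw [e] at h
  have h2 := pow_le_pow_left₀ (norm_nonneg _) h 2
  rw [mul_pow, EuclideanSpace.real_norm_sq_eq] at h2
  rw [EuclideanSpace.real_norm_sq_eq] at h2 ⊢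
  exact h2

theorem aux_u (x : Idx k n → EuclideanSpace ℝ (Fin m)) (z : ℝ) (v : Idx k n → ℝ)
    (hv : ∀ a, ∑ i, v ⟨a, i⟩ = 0) (a b : Fin k) :
    |∑ i, uvec x z a b i * v ⟨a, i⟩| ≤ MrowPerpNorm x a b * Real.sqrt (∑ i, v ⟨a, i⟩ ^ 2) := by
  have h1 : ∑ i, uvec x z a b i * v ⟨a, i⟩ =
      ∑ i, (Mrow x a b i - (∑ j : Fin (n a), Mrow x a b j) / (n a : ℝ)) * v ⟨a, i⟩ := by
    unfold uvec
    simp only [sub_mul, Finset.sum_sub_distrib, ← Finset.mul_sum, hv]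
    simp
  rw [h1]
  unfold MrowPerpNorm
  rw [← Real.sqrt_mul (Finset.sum_nonneg fun _ _ => sq_nonneg _)]
  apply Real.abs_le_sqrt
  exact Finset.sum_mul_sq_le_sq_mul_sq _ _ _

theorem aux_sum_symm (f : Fin k → Fin k → ℝ) (hf : ∀ a b, f a b = f b a) (hd : ∀ a, f a a = 0) :
    ∑ a, ∑ b, f a b = 2 * ∑ a, ∑ b ∈ Finset.Ioi a, f a b := by
  have h : ∀ a b, f a b = (if a < b then f a b else 0) + (if b < a then f b a else 0) := by
    intro a b
    rcases lt_trichotomy a b with h | h | h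
    · simp [h, h.not_gt]
    · subst h; simp [hd]
    · simp [h, h.not_gt, hf a b]
  have h2 : ∀ a : Fin k, ∑ b ∈ Finset.Ioi a, f a b = ∑ b, if a < b then f a b else 0 := by
    intro a
    rw [← Finset.sum_filter]
    refine Finset.sum_congr ?_ fun _ _ => rfl
    ext; simp
  simp only [h2]
  calc ∑ a, ∑ b, f a b = ∑ a, ∑ b, ((if a < b then f a b else 0) + (if b < a then f b a else 0)) :=
        Finset.sum_congr rfl fun a _ => Finset.sum_congr rfl fun b _ => h a b
    _ = _ := by
      simp only [Finset.sum_add_distrib]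
      rw [Finset.sum_comm (f := fun a b => if b < a then f b a else 0)]
      ring

theorem aux_B_form (hn : ∀ a, 0 < n a) (x : Idx k n → EuclideanSpace ℝ (Fin m)) (z : ℝ)
    (hρ : ∀ a b : Fin k, a ≠ b → 0 < rho x z a b) (v : Idx k n → ℝ)
    (hv : ∀ a, ∑ i, v ⟨a, i⟩ = 0) :
    ∑ p, ∑ q, auxB x z p q * v p * v q ≤ (∑ a : Fin k, ∑ b ∈ Finset.Ioi a,
          MrowPerpNorm x a b * MrowPerpNorm x b a / rho x z a b) * ∑ p, v p ^ 2 := by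
  set s : Fin k → Fin k → ℝ := fun a b => ∑ i, uvec x z a b i * v ⟨a, i⟩ with hs
  set f : Fin k → Fin k → ℝ := fun a b => if a = b then 0 else s a b * s b a / rho x z a b with hf
  have e1 : ∑ p, ∑ q, auxB x z p q * v p * v q = ∑ a, ∑ b, f a b := by
    rw [Fintype.sum_sigma]
    refine Finset.sum_congr rfl fun a _ => ?_
    simp only [Fintype.sum_sigma]
    rw [Finset.sum_comm]
    refine Finset.sum_congr rfl fun b _ => ?_
    by_cases hab : a = b
    · simp [hf, auxB, hab]
    · simp only [hf, auxB, hab, if_false, hs]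
      rw [Finset.sum_mul_sum, Finset.sum_div]
      refine Finset.sum_congr rfl fun i _ => ?_
      rw [Finset.sum_div]
      refine Finset.sum_congr rfl fun j _ => ?_
      ring
  rw [e1, aux_sum_symm f ?_ ?_, Finset.sum_mul, Finset.mul_sum]
  · refine Finset.sum_le_sum fun a _ => ?_
    rw [Finset.sum_mul, Finset.mul_sum]
    refine Finset.sum_le_sum fun b hb => ?_
    have hab : a ≠ b := (Finset.mem_Ioi.1 hb).ne
    have hr := hρ a b hab
    simp only [hf, hab, if_false]
    have h1 := aux_u x z v hv a b
    have h2 := aux_u x z v hv b a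
    set A := ∑ i, v ⟨a, i⟩ ^ 2 with hA
    set B := ∑ i, v ⟨b, i⟩ ^ 2 with hB
    have hA0 : 0 ≤ A := Finset.sum_nonneg fun _ _ => sq_nonneg _
    have hB0 : 0 ≤ B := Finset.sum_nonneg fun _ _ => sq_nonneg _
    have hP : 0 ≤ MrowPerpNorm x a b := Real.sqrt_nonneg _
    have hP' : 0 ≤ MrowPerpNorm x b a := Real.sqrt_nonneg _
    have hAB : A + B ≤ ∑ p, v p ^ 2 := by
      rw [Fintype.sum_sigma, ← Finset.sum_pair (f := fun a => ∑ i, v ⟨a, i⟩ ^ 2) hab]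
      exact Finset.sum_le_sum_of_subset_of_nonneg (Finset.subset_univ _)
        fun _ _ _ => Finset.sum_nonneg fun _ _ => sq_nonneg _
    have h3 : s a b * s b a ≤ MrowPerpNorm x a b * MrowPerpNorm x b a * (√A * √B) := by
      calc s a b * s b a ≤ |s a b * s b a| := le_abs_self _
        _ = |s a b| * |s b a| := abs_mul _ _
        _ ≤ (MrowPerpNorm x a b * √A) * (MrowPerpNorm x b a * √B) :=
          mul_le_mul h1 h2 (abs_nonneg _) (by positivity)
        _ = _ := by ring
    have h4 : 2 * (√A * √B) ≤ ∑ p, v p ^ 2 := by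
      nlinarith [sq_nonneg (√A - √B), Real.sq_sqrt hA0, Real.sq_sqrt hB0]
    rw [← mul_div_assoc, div_mul_eq_mul_div]
    apply div_le_div_of_nonneg_right _ hr.le
    nlinarith [mul_le_mul_of_nonneg_left h4 (mul_nonneg hP hP')]
  · intro a b
    simp only [hf, eq_comm (a := a) (b := b), aux_rho_symm hn x z a b, mul_comm (s a b)]
  · intro a; simp [hf]

theorem auxQ_form_perp (hn : ∀ a, 0 < n a) (x : Idx k n → EuclideanSpace ℝ (Fin m)) (z : ℝ)
    (hρ : ∀ a b : Fin k, a ≠ b → 0 < rho x z a b)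
    (hcert : 2 * specNorm (Psi x) ^ 2 +
        ∑ a : Fin k, ∑ b ∈ Finset.Ioi a,
          MrowPerpNorm x a b * MrowPerpNorm x b a / rho x z a b ≤ z)
    (v : Idx k n → ℝ) (hv : ∀ a, ∑ i, v ⟨a, i⟩ = 0) :
    0 ≤ ∑ p, ∑ q, auxQ x z p q * v p * v q := by
  have h1 := aux_B_form hn x z hρ v hv
  have h2 := aux_M_form hn x v hv
  have h3 := aux_Psi x v
  have h4 := aux_block_zero (fun p b => auxC n z p p / 2) v hv
  have h5 := aux_block_zero (fun p b => auxC n z p p / 2) v hv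
  rw [Finset.sum_comm] at h5
  have e : ∀ p q, auxQ x z p q * v p * v q = Mmat x p q * v p * v q - auxB x z p q * v p * v q
      - auxC n z p p / 2 * v p * v q - auxC n z q q / 2 * v q * v p
      + if p = q then z * v p * v q else 0 := by
    intro p q
    unfold auxQ
    have : auxC n z p q = auxC n z p p / 2 + auxC n z q q / 2 := by unfold auxC; ring
    rw [this]
    split_ifs <;> ring
  simp only [e, Finset.sum_add_distrib, Finset.sum_sub_distrib]
  rw [h4, h5]
  have e2 : ∑ p, ∑ q, (if p = q then z * v p * v q else 0) = z * ∑ p, v p ^ 2 := by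
    simp [Finset.mul_sum, pow_two, mul_assoc]
  have h6 : 0 ≤ ∑ p, v p ^ 2 := Finset.sum_nonneg fun _ _ => sq_nonneg _
  rw [e2, h2]
  nlinarith [mul_le_mul_of_nonneg_right hcert h6]

theorem auxQ_form (hn : ∀ a, 0 < n a) (x : Idx k n → EuclideanSpace ℝ (Fin m)) (z : ℝ)
    (hρ : ∀ a b : Fin k, a ≠ b → 0 < rho x z a b)
    (hcert : 2 * specNorm (Psi x) ^ 2 +
        ∑ a : Fin k, ∑ b ∈ Finset.Ioi a,
          MrowPerpNorm x a b * MrowPerpNorm x b a / rho x z a b ≤ z)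
    (w : Idx k n → ℝ) :
    0 ≤ ∑ p, ∑ q, auxQ x z p q * w p * w q := by
  set t : Fin k → ℝ := fun a => (∑ i, w ⟨a, i⟩) / n a with ht
  set v : Idx k n → ℝ := fun p => w p - t p.1 with hvdef
  have hv : ∀ a, ∑ i, v ⟨a, i⟩ = 0 := by
    intro a
    have ha : (n a : ℝ) ≠ 0 := by have := hn a; positivity
    change ∑ i : Fin (n a), (w ⟨a, i⟩ - (∑ i, w ⟨a, i⟩) / n a) = 0
    simp only [Finset.sum_sub_distrib, Finset.sum_const, Finset.card_univ,
      Fintype.card_fin, nsmul_eq_mul]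
    field_simp
    ring
  have h := auxQ_form_perp hn x z hρ hcert v hv
  have key : ∀ g : Idx k n → ℝ, ∑ p, ∑ q, auxQ x z p q * g p * t q.1 = 0 := by
    intro g
    refine Finset.sum_eq_zero fun p _ => ?_
    rw [Fintype.sum_sigma]
    refine Finset.sum_eq_zero fun b _ => ?_
    simp only [← Finset.sum_mul, auxQ_row hn x z hρ, zero_mul]
  have k1 := key v
  have k2 := key w
  rw [Finset.sum_comm] at k1
  have e : ∀ p q, auxQ x z p q * w p * w q = auxQ x z p q * v p * v q
      + auxQ x z p q * w p * t q.1 + auxQ x z q p * v q * t p.1 := by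
    intro p q
    rw [auxQ_symm hn x z q p]
    simp only [hvdef]; ring
  simp only [e, Finset.sum_add_distrib]
  rw [k1, k2]
  linarith

theorem aux_trace_D (x : Idx k n → EuclideanSpace ℝ (Fin m)) (Y : Matrix (Idx k n) (Idx k n) ℝ)
    (h1 : Y *ᵥ (fun _ => (1 : ℝ)) = (fun _ => (1 : ℝ))) (hs : ∀ p q, Y p q = Y q p) :
    (sqDist x * Y).trace = ∑ p, ∑ q, Mmat x p q * Y p q - ∑ p, phi x p := by
  have hr : ∀ p, ∑ q, Y p q = 1 := by
    intro p
    have := congrFun h1 p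
    simpa [Matrix.mulVec, dotProduct] using this
  have hc : ∀ q, ∑ p, Y p q = 1 := by
    intro q; rw [← hr q]; exact Finset.sum_congr rfl fun p _ => hs p q
  have e : ∀ p q, Mmat x p q * Y p q = sqDist x p q * Y q p + phi x p / 2 * Y p q
     + phi x q / 2 * Y p q := by
    intro p q; rw [hs q p]; unfold Mmat; ring
  have e2 : ∑ p, ∑ q, phi x q / 2 * Y p q = ∑ q, phi x q / 2 := by
    rw [Finset.sum_comm]
    simp only [← Finset.mul_sum, hc, mul_one]
  simp only [e, Finset.sum_add_distrib, e2]
  simp only [← Finset.mul_sum, hr, mul_one, ← Finset.sum_div]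
  simp only [Matrix.trace, Matrix.diag, Matrix.mul_apply]
  ring

theorem aux_main_ineq (hn : ∀ a, 0 < n a) (x : Idx k n → EuclideanSpace ℝ (Fin m)) (z : ℝ)
    (hu : ∀ a b i, a ≠ b → 0 ≤ uvec x z a b i)
    (hρ : ∀ a b : Fin k, a ≠ b → 0 < rho x z a b)
    (hcert : 2 * specNorm (Psi x) ^ 2 +
        ∑ a : Fin k, ∑ b ∈ Finset.Ioi a,
          MrowPerpNorm x a b * MrowPerpNorm x b a / rho x z a b ≤ z)
    (Y : Matrix (Idx k n) (Idx k n) ℝ) (hY : SDPFeasible Y) :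
    0 ≤ ∑ p, ∑ q, Mmat x p q * Y p q := by
  obtain ⟨htr, h1, hpos, hpsd⟩ := hY
  have hs : ∀ p q, Y p q = Y q p := by
    intro p q
    simpa using (hpsd.1.apply p q).symm
  have hr : ∀ p, ∑ q, Y p q = 1 := by
    intro p
    have := congrFun h1 p
    simpa [Matrix.mulVec, dotProduct] using this
  have hc : ∀ q, ∑ p, Y p q = 1 := by
    intro q; rw [← hr q]; exact Finset.sum_congr rfl fun p _ => hs p q
  have hQ : 0 ≤ ∑ p, ∑ q, auxQ x z p q * Y p q := by
    obtain ⟨r, w, hw⟩ := Matrix.posSemidef_iff_eq_sum_vecMulVec.1 hpsd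
    have e : ∑ p, ∑ q, auxQ x z p q * Y p q
        = ∑ l, ∑ p, ∑ q, auxQ x z p q * w l p * w l q := by
      rw [Finset.sum_comm]
      rw [Finset.sum_comm]
      rw [Finset.sum_comm (s := Finset.univ (α := Fin r))]
      refine Finset.sum_congr rfl fun p _ => ?_
      rw [Finset.sum_comm]
      refine Finset.sum_congr rfl fun q _ => ?_
      rw [hw]
      simp [Matrix.sum_apply, Matrix.vecMulVec_apply, Finset.mul_sum, mul_assoc]
    rw [e]
    exact Finset.sum_nonneg fun l _ => auxQ_form hn x z hρ hcert (w l)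
  have hB : 0 ≤ ∑ p, ∑ q, auxB x z p q * Y p q := by
    refine Finset.sum_nonneg fun p _ => Finset.sum_nonneg fun q _ => mul_nonneg ?_ (hpos p q)
    unfold auxB
    split_ifs with h
    · exact le_rfl
    · exact div_nonneg (mul_nonneg (hu _ _ _ h) (hu _ _ _ (Ne.symm h))) (hρ _ _ h).le
  have hk : ∑ p : Idx k n, (n p.1 : ℝ)⁻¹ = k := by
    rw [Fintype.sum_sigma]
    have : ∀ a, (n a : ℝ) * (n a : ℝ)⁻¹ = 1 := by
      intro a; have := hn a; exact mul_inv_cancel₀ (by positivity)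
    simp [this]
  have hC : ∑ p, ∑ q, auxC n z p q * Y p q = z * k := by
    have e : ∀ p q, auxC n z p q * Y p q
        = z / 2 * (n p.1 : ℝ)⁻¹ * Y p q + z / 2 * (n q.1 : ℝ)⁻¹ * Y p q := by
      intro p q; unfold auxC; ring
    simp only [e, Finset.sum_add_distrib]
    rw [Finset.sum_comm (f := fun p q => z / 2 * (n q.1 : ℝ)⁻¹ * Y p q)]
    simp only [← Finset.mul_sum, hr, hc, mul_one, hk]
    ring
  have hI : ∑ p, ∑ q, (if p = q then z * Y p q else 0) = z * k := by
    rw [← htr]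
    simp [Matrix.trace, Finset.mul_sum]
  have e : ∀ p q, auxQ x z p q * Y p q = Mmat x p q * Y p q - auxB x z p q * Y p q
      - auxC n z p q * Y p q + if p = q then z * Y p q else 0 := by
    intro p q; unfold auxQ; split_ifs <;> ring
  simp only [e, Finset.sum_add_distrib, Finset.sum_sub_distrib] at hQ
  rw [hC, hI] at hQ
  linarith

theorem aux_feasible (hn : ∀ a, 0 < n a) (X : Matrix (Idx k n) (Idx k n) ℝ)
    (hX : X = fun p q => if p.1 = q.1 then ((n p.1 : ℝ))⁻¹ else 0) : SDPFeasible X := by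
  have hne : ∀ a, (n a : ℝ) * (n a : ℝ)⁻¹ = 1 := by
    intro a; have := hn a; exact mul_inv_cancel₀ (by positivity)
  have hXa : ∀ p q, X p q = if p.1 = q.1 then ((n p.1 : ℝ))⁻¹ else 0 := by
    intro p q; rw [hX]
  have hmul : ∀ (w : Idx k n → ℝ) (p : Idx k n),
      ∑ q, X p q * w q = (n p.1 : ℝ)⁻¹ * ∑ j, w ⟨p.1, j⟩ := by
    intro w p
    rw [Fintype.sum_sigma, Finset.sum_eq_single p.1]
    · simp [hXa, Finset.mul_sum]
    · intro b _ hb; simp [hXa, hb.symm]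
    · simp
  refine ⟨?_, ?_, ?_, ?_⟩
  · simp [Matrix.trace, hXa, Fintype.sum_sigma, hne]
  · funext p
    simp only [Matrix.mulVec, dotProduct]
    rw [hmul]
    simp [mul_comm _ (n p.1 : ℝ), hne, mul_comm (n p.1 : ℝ)⁻¹]
  · intro p q
    rw [hXa]
    split_ifs <;> positivity
  · refine .of_dotProduct_mulVec_nonneg ?_ fun w => ?_
    · ext p q
      simp only [Matrix.conjTranspose_apply, hXa, star_trivial]
      by_cases h : p.1 = q.1
      · simp [h]
      · simp [h, Ne.symm h]
    · have : star w ⬝ᵥ (X *ᵥ w) = ∑ a, (n a : ℝ)⁻¹ * (∑ i, w ⟨a, i⟩) ^ 2 := by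
        simp only [Matrix.mulVec, dotProduct, hmul, star_trivial]
        rw [Fintype.sum_sigma]
        refine Finset.sum_congr rfl fun a _ => ?_
        change ∑ y : Fin (n a), w ⟨a, y⟩ * ((n a : ℝ)⁻¹ * ∑ j, w ⟨a, j⟩) = _
        rw [← Finset.sum_mul]; ring
      rw [this]
      exact Finset.sum_nonneg fun a _ => by positivity

theorem aux_MX (hn : ∀ a, 0 < n a) (x : Idx k n → EuclideanSpace ℝ (Fin m))
    (X : Matrix (Idx k n) (Idx k n) ℝ)
    (hX : X = fun p q => if p.1 = q.1 then ((n p.1 : ℝ))⁻¹ else 0) :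
    ∑ p, ∑ q, Mmat x p q * X p q = 0 := by
  refine Finset.sum_eq_zero fun p _ => ?_
  obtain ⟨a, i⟩ := p
  rw [Fintype.sum_sigma, hX]
  refine Finset.sum_eq_zero fun b _ => ?_
  by_cases h : a = b
  · subst h
    simp only [if_true, ← Finset.sum_mul]
    have := aux_Mrow_diag hn x a i
    unfold Mrow at this
    rw [this, zero_mul]
  · simp [h]

end helpers

/-- (Corollary 2.5 of the paper.) With `M`, `z`, `u`, `ρ`, `Ψ` as
above and `ρ_{(a,b)} > 0` for all `a ≠ b`, if
`2‖Ψ‖²₂→₂ + Σ_a Σ_{b>a} ‖P_{1⊥}M^{(a,b)}1‖₂·‖P_{1⊥}M^{(b,a)}1‖₂/ρ_{(a,b)} ≤ z`,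
then `X = Σ_a (1/n_a)·1_a1_aᵀ` solves the k-means SDP. -/
theorem dual_certificate_corollary_implies_SDP_optimal
    (m k : ℕ) (hk : 1 < k) (n : Fin k → ℕ) (hn : ∀ a, 0 < n a)
    (x : Idx k n → EuclideanSpace ℝ (Fin m))
    (X : Matrix (Idx k n) (Idx k n) ℝ)
    (hX : X = fun p q => if p.1 = q.1 then ((n p.1 : ℝ))⁻¹ else 0)
    (z : ℝ)
    (hz : IsLeast {t : ℝ | ∃ (a b : Fin k) (i : Fin (n a)), a ≠ b ∧
      t = (2 * (n a : ℝ) / ((n a : ℝ) + (n b : ℝ))) * Mrow x a b i} z)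
    (hρ : ∀ a b : Fin k, a ≠ b → 0 < rho x z a b)
    (hcert : 2 * specNorm (Psi x) ^ 2 +
        ∑ a : Fin k, ∑ b ∈ Finset.Ioi a,
          MrowPerpNorm x a b * MrowPerpNorm x b a / rho x z a b ≤ z) :
    SolvesSDP x X := by
  have hu : ∀ a b i, a ≠ b → 0 ≤ uvec x z a b i := by
    intro a b i hab
    have ha : (0 : ℝ) < n a := by exact_mod_cast hn a
    have hb : (0 : ℝ) < n b := by exact_mod_cast hn b
    have h := hz.2 ⟨a, b, i, hab, rfl⟩
    unfold uvec
    have h2 := mul_le_mul_of_nonneg_right h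
      (by positivity : 0 ≤ ((n a : ℝ) + (n b : ℝ)) / (2 * (n a : ℝ)))
    have h3 : (2 * (n a : ℝ) / ((n a : ℝ) + (n b : ℝ))) * Mrow x a b i *
      (((n a : ℝ) + (n b : ℝ)) / (2 * (n a : ℝ))) = Mrow x a b i := by field_simp
    linarith
  have hf := aux_feasible hn X hX
  refine ⟨hf, fun Y hY => ?_⟩
  have hs : ∀ Y : Matrix (Idx k n) (Idx k n) ℝ, SDPFeasible Y → ∀ p q, Y p q = Y q p := by
    intro Y hY p q
    simpa using (hY.2.2.2.1.apply p q).symm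
  rw [aux_trace_D x X hf.2.1 (hs X hf), aux_trace_D x Y hY.2.1 (hs Y hY), aux_MX hn x X hX]
  have := aux_main_ineq hn x z hu hρ hcert Y hY
  linarith
end

section
/- Fix k, m, centers γ_1,…,γ_k ∈ ℝ^m, and a rotation-invariant probability distribution 𝒟 on ℝ^m supported on the closed unit ball with sup{t : Pr(‖r‖₂ ≥ t) > 0} = 1. If Δ := min_{a≠b} ‖γ_a − γ_b‖₂ satisfies Δ > 2 + k²/m, then there exist constants c > 0 and n₀ (depending only on 𝒟 and the centers γ) such that for every n ≥ n₀: with probability at least 1 − e^{−cn} over a draw from the (𝒟, γ, n)-stochastic ball model, the matrix X := Σ_{a=1}^k (1/n)·1_{A_a}1_{A_a}ᵀ corresponding to the planted clusters solves the k-means SDP (so the SDP recovers the planted clusters). -/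
open scoped BigOperators ENNReal
open Matrix MeasureTheory

namespace Stmt4

variable {m : ℕ} {ι : Type*} [Fintype ι] [DecidableEq ι]

/-- The matrix of squared pairwise distances `D_{pq} = ‖x_p − x_q‖₂²`. -/
noncomputable def sqDist (x : ι → EuclideanSpace ℝ (Fin m)) : Matrix ι ι ℝ :=
  fun p q => ‖x p - x q‖ ^ 2

/-- Feasibility for the k-means SDP. -/
def SDPFeasible (k : ℕ) (X : Matrix ι ι ℝ) : Prop :=
  X.trace = (k : ℝ) ∧ X *ᵥ (fun _ => (1 : ℝ)) = (fun _ => (1 : ℝ)) ∧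
    (∀ p q, 0 ≤ X p q) ∧ X.PosSemidef

/-- `X` solves the k-means SDP for the points `x`. -/
noncomputable def SolvesSDP (k : ℕ) (x : ι → EuclideanSpace ℝ (Fin m))
    (X : Matrix ι ι ℝ) : Prop :=
  SDPFeasible k X ∧ ∀ Y : Matrix ι ι ℝ, SDPFeasible k Y →
    (sqDist x * X).trace ≤ (sqDist x * Y).trace

end Stmt4

open Stmt4


lemma quad_aux {m k : ℕ} (w : Fin k → EuclideanSpace ℝ (Fin m))
    (δ : Fin k → Fin k → EuclideanSpace ℝ (Fin m)) (Δ ζ : ℝ) (hΔ : 2 < Δ)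
    (hζ : ζ = Δ * (Δ - 2)) (hδ : ∀ a b, a ≠ b → Δ ≤ ‖δ a b‖) :
    0 ≤ (2 * k + 2 * Δ * (k - 1)) * ∑ a, ‖w a‖ ^ 2 - 2 * ‖∑ a, w a‖ ^ 2
      + ∑ a, ∑ b, if a = b then 0 else
        4 / (‖δ a b‖ ^ 2 - ζ) * (inner ℝ (δ a b) (w a) * inner ℝ (δ a b) (w b)) := by
  have h1 : ‖∑ a, w a‖ ^ 2 ≤ k * ∑ a, ‖w a‖ ^ 2 := by
    have h := norm_sum_le Finset.univ w
    have h2 := sq_sum_le_card_mul_sum_sq (s := (Finset.univ : Finset (Fin k))) (f := fun a => ‖w a‖)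
    simp only [Finset.card_univ, Fintype.card_fin] at h2
    refine le_trans ?_ h2
    gcongr
  have h2 : ∀ a b, (if a = b then 0 else -(Δ * (‖w a‖ ^ 2 + ‖w b‖ ^ 2))) ≤ if a = b then 0 else
        4 / (‖δ a b‖ ^ 2 - ζ) * (inner ℝ (δ a b) (w a) * inner ℝ (δ a b) (w b)) := by
    intro a b
    split_ifs with hab
    · exact le_rfl
    have hd := hδ a b hab
    have hpos : 0 < ‖δ a b‖ ^ 2 - ζ := by rw [hζ]; nlinarith
    have hκ : 4 / (‖δ a b‖ ^ 2 - ζ) * ‖δ a b‖ ^ 2 ≤ 2 * Δ := by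
      rw [div_mul_eq_mul_div, div_le_iff₀ hpos, hζ]
      have : Δ ^ 2 ≤ ‖δ a b‖ ^ 2 := by gcongr
      nlinarith [mul_le_mul_of_nonneg_left this (by linarith : 0 ≤ 2 * (Δ - 2))]
    have i1 := abs_real_inner_le_norm (δ a b) (w a)
    have i2 := abs_real_inner_le_norm (δ a b) (w b)
    have i3 : |inner ℝ (δ a b) (w a) * inner ℝ (δ a b) (w b)|
        ≤ ‖δ a b‖ ^ 2 * (‖w a‖ * ‖w b‖) := by
      rw [abs_mul]
      calc _ ≤ (‖δ a b‖ * ‖w a‖) * (‖δ a b‖ * ‖w b‖) := by gcongr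
        _ = _ := by ring
    have i4 := (abs_le.1 i3).1
    have i5 : 4 / (‖δ a b‖ ^ 2 - ζ) * (-(‖δ a b‖ ^ 2 * (‖w a‖ * ‖w b‖))) ≤
       4 / (‖δ a b‖ ^ 2 - ζ) * (inner ℝ (δ a b) (w a) * inner ℝ (δ a b) (w b)) := by gcongr
    have i6 : 4 / (‖δ a b‖ ^ 2 - ζ) * ‖δ a b‖ ^ 2 * (‖w a‖ * ‖w b‖) ≤ 2 * Δ * (‖w a‖ * ‖w b‖) := by
      gcongr
    nlinarith [mul_nonneg (by linarith : 0 ≤ Δ) (sq_nonneg (‖w a‖ - ‖w b‖))]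
  have h3 := Finset.sum_le_sum fun a (_ : a ∈ Finset.univ) =>
    Finset.sum_le_sum fun b (_ : b ∈ Finset.univ) => h2 a b
  have h4 : ∑ a, ∑ b, (if a = b then 0 else -(Δ * (‖w a‖ ^ 2 + ‖w b‖ ^ 2)))
      = - (2 * Δ * (k - 1)) * ∑ a, ‖w a‖ ^ 2 := by
    have : ∀ a b, (if a = b then 0 else -(Δ * (‖w a‖ ^ 2 + ‖w b‖ ^ 2)))
       = -(Δ * (‖w a‖ ^ 2 + ‖w b‖ ^ 2)) + if a = b then 2 * Δ * ‖w a‖ ^ 2 else 0 := by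
      intro a b
      split_ifs with h
      · subst h; ring
      · ring
    simp only [this, Finset.sum_add_distrib, Finset.sum_ite_eq, Finset.mem_univ, if_true,
      Finset.sum_neg_distrib, ← Finset.mul_sum, Finset.sum_const, Finset.card_univ,
      Fintype.card_fin, nsmul_eq_mul]
    ring
  rw [h4] at h3
  nlinarith

/-- Within-cluster bound. -/
lemma cluster_aux {m n : ℕ} (hn : 0 < n) (y : Fin n → EuclideanSpace ℝ (Fin m)) (v : Fin n → ℝ)
    (s : ℝ) (hs : 0 ≤ s) (hy : ∑ i, y i = 0)
    (h3 : ∀ w, ∑ i, (inner ℝ (y i) w) ^ 2 ≤ n * s * ‖w‖ ^ 2) :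
    ‖∑ i, v i • y i‖ ^ 2 ≤ n * s * (∑ i, v i ^ 2 - (n : ℝ)⁻¹ * (∑ i, v i) ^ 2) := by
  have hn' : (n : ℝ) ≠ 0 := by positivity
  set w := ∑ i, v i • y i with hw
  set μ := (n : ℝ)⁻¹ * ∑ i, v i with hμ
  have hV : ∑ i, v i ^ 2 - (n : ℝ)⁻¹ * (∑ i, v i) ^ 2 = ∑ i, (v i - μ) ^ 2 := by
    simp only [sub_sq, Finset.sum_add_distrib, Finset.sum_sub_distrib, ← Finset.mul_sum,
      ← Finset.sum_mul, Finset.sum_const, Finset.card_univ, Fintype.card_fin, nsmul_eq_mul]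
    rw [hμ]
    field_simp
    ring
  have hw2 : w = ∑ i, (v i - μ) • y i := by
    simp only [sub_smul, Finset.sum_sub_distrib, ← Finset.smul_sum, hy, smul_zero, sub_zero, hw]
  have hnorm : ‖w‖ ^ 2 = ∑ i, (v i - μ) * inner ℝ (y i) w := by
    rw [← real_inner_self_eq_norm_sq]
    nth_rewrite 1 [hw2]
    rw [sum_inner]
    simp only [real_inner_smul_left]
  have hcs := Finset.sum_mul_sq_le_sq_mul_sq Finset.univ (fun i => v i - μ) (fun i => inner ℝ (y i) w)
  rw [← hnorm] at hcs
  rw [hV]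
  have hVn : 0 ≤ ∑ i, (v i - μ) ^ 2 := Finset.sum_nonneg fun _ _ => sq_nonneg _
  have := mul_le_mul_of_nonneg_left (h3 w) hVn
  by_cases h0 : ‖w‖ = 0
  · rw [h0]
    rw [zero_pow two_ne_zero]
    positivity
  · have hp : 0 < ‖w‖ ^ 2 := by positivity
    have h6 : ‖w‖ ^ 2 * ‖w‖ ^ 2 ≤ (n * s * ∑ i, (v i - μ) ^ 2) * ‖w‖ ^ 2 := by nlinarith
    exact le_of_mul_le_mul_right h6 hp

lemma sum_mul_nonneg_of_quad {ι : Type*} [Fintype ι] [DecidableEq ι] (Q Y : Matrix ι ι ℝ)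
    (hY : Y.PosSemidef) (hQ : ∀ v : ι → ℝ, 0 ≤ ∑ p, ∑ q, Q p q * (v p * v q)) :
    0 ≤ ∑ p, ∑ q, Q p q * Y p q := by
  obtain ⟨C, hC⟩ : ∃ C : Matrix ι ι ℝ, Y = Cᴴ * C := by
    open scoped MatrixOrder in
    exact CStarAlgebra.nonneg_iff_eq_star_mul_self.mp hY.nonneg
  have : ∑ p, ∑ q, Q p q * Y p q = ∑ l, ∑ p, ∑ q, Q p q * (C l p * C l q) := by
    rw [Finset.sum_comm (s := Finset.univ) (t := Finset.univ) (f := fun l p => ∑ q, Q p q * (C l p * C l q))]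
    refine Finset.sum_congr rfl fun p _ => ?_
    rw [Finset.sum_comm (s := Finset.univ) (t := Finset.univ)]
    refine Finset.sum_congr rfl fun q _ => ?_
    rw [hC, Matrix.mul_apply, Finset.mul_sum]
    simp [Matrix.conjTranspose_apply]
  rw [this]
  exact Finset.sum_nonneg fun l _ => hQ _

lemma sum_same {k n : ℕ} (a : Fin k) (f : Fin k × Fin n → ℝ) :
    (∑ q : Fin k × Fin n, if a = q.1 then f q else 0) = ∑ i, f (a, i) := by
  rw [Fintype.sum_prod_type, Finset.sum_eq_single a]
  · simp
  · intro b _ hb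
    simp [hb.symm]
  · simp

lemma planted_feasible {k n : ℕ} (hn : 0 < n) (X : Matrix (Fin k × Fin n) (Fin k × Fin n) ℝ)
    (hX : ∀ p q, X p q = if p.1 = q.1 then ((n : ℝ))⁻¹ else 0) : SDPFeasible k X := by
  have hn' : (n : ℝ) ≠ 0 := by positivity
  refine ⟨?_, ?_, ?_, ?_⟩
  · simp [Matrix.trace, hX, hn']
  · ext p
    simp only [Matrix.mulVec, dotProduct, hX, mul_one]
    rw [sum_same p.1 (fun _ => (n : ℝ)⁻¹)]
    simp [hn']
  · intro p q
    rw [hX]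
    split_ifs <;> positivity
  · refine Matrix.PosSemidef.of_dotProduct_mulVec_nonneg ?_ ?_
    · ext p q
      simp [Matrix.conjTranspose_apply, hX, eq_comm]
    · intro v
      have : star v ⬝ᵥ (X *ᵥ v) = ∑ a, (n : ℝ)⁻¹ * (∑ i, v (a, i)) ^ 2 := by
        simp only [Matrix.mulVec, dotProduct, Pi.star_apply, star_trivial, hX,
          ite_mul, zero_mul]
        simp only [sum_same _ (fun q => (n : ℝ)⁻¹ * v q)]
        rw [Fintype.sum_prod_type]
        refine Finset.sum_congr rfl fun a _ => ?_
        simp only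
        rw [← Finset.sum_mul, ← Finset.mul_sum]
        ring
      rw [this]
      positivity

lemma certificate {m k n : ℕ} (hn : 0 < n)
    (x y : Fin k × Fin n → EuclideanSpace ℝ (Fin m)) (c : Fin k → EuclideanSpace ℝ (Fin m))
    (Δ ζ s : ℝ) (hs : 0 ≤ s) (X : Matrix (Fin k × Fin n) (Fin k × Fin n) ℝ)
    (hX' : ∀ p q, X p q = if p.1 = q.1 then ((n : ℝ))⁻¹ else 0)
    (hx : ∀ p, x p = c p.1 + y p) (hy : ∀ a, ∑ i, y (a, i) = 0)
    (hΔ : 2 < Δ) (hζ : ζ = Δ * (Δ - 2))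
    (h1 : ∀ a b, a ≠ b → Δ ≤ ‖c a - c b‖)
    (h2 : ∀ a b, a ≠ b → ∀ i, ζ ≤ ‖c a - c b‖ ^ 2 + 2 * inner ℝ (c a - c b) (y (a, i)))
    (h3 : ∀ a w, ∑ i, (inner ℝ (y (a, i)) w) ^ 2 ≤ n * s * ‖w‖ ^ 2)
    (h4 : s * (2 * k + 2 * Δ * (k - 1)) ≤ ζ) :
    SolvesSDP k x X := by
  have hn' : (n : ℝ) ≠ 0 := by positivity
  refine ⟨planted_feasible hn X hX', ?_⟩
  rintro Y ⟨hYtr, hY1, hY0, hYpsd⟩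
  have htr : ∀ Z : Matrix (Fin k × Fin n) (Fin k × Fin n) ℝ,
      (sqDist x * Z).trace = ∑ p, ∑ q, ‖x p - x q‖ ^ 2 * Z q p := by
    intro Z
    simp [Matrix.trace, Matrix.mul_apply, sqDist]
  have hsym : ∀ p q, Y q p = Y p q := fun p q => by
    simpa using hYpsd.1.apply p q
  -- value at planted
  have hX : (sqDist x * X).trace = 2 * ∑ p, ‖y p‖ ^ 2 := by
    rw [htr]
    simp only [hX', mul_ite, mul_zero]
    have : ∀ p : Fin k × Fin n, (∑ q, if q.1 = p.1 then ‖x p - x q‖ ^ 2 * (n : ℝ)⁻¹ else 0)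
        = ∑ j, ‖x p - x (p.1, j)‖ ^ 2 * (n : ℝ)⁻¹ := fun p => by
      rw [← sum_same p.1 (fun q => ‖x p - x q‖ ^ 2 * (n : ℝ)⁻¹)]
      simp only [eq_comm]
    simp only [this]
    rw [Fintype.sum_prod_type, Fintype.sum_prod_type, Finset.mul_sum]
    refine Finset.sum_congr rfl fun a _ => ?_
    have e : ∀ i j, ‖x (a, i) - x (a, j)‖ ^ 2 * (n : ℝ)⁻¹ =
      (‖y (a, i)‖ ^ 2 - 2 * inner ℝ (y (a, i)) (y (a, j)) + ‖y (a, j)‖ ^ 2) * (n : ℝ)⁻¹ := by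
      intro i j
      rw [hx, hx, add_sub_add_left_eq_sub, norm_sub_sq_real]
    simp only [e, ← Finset.sum_mul, Finset.sum_add_distrib, Finset.sum_sub_distrib,
      ← Finset.mul_sum, ← inner_sum, hy, inner_zero_right, Finset.sum_const, Finset.card_univ,
      Fintype.card_fin, nsmul_eq_mul]
    field_simp
    ring
  rw [hX, htr]
  -- certificate
  set δ : Fin k → Fin k → EuclideanSpace ℝ (Fin m) := fun a b => c a - c b with hδ
  set Q : Matrix (Fin k × Fin n) (Fin k × Fin n) ℝ := fun p q =>
    n * ζ * ((if p = q then 1 else 0) - if p.1 = q.1 then (n : ℝ)⁻¹ else 0)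
      - 2 * inner ℝ (y p) (y q)
      + if p.1 = q.1 then 0 else 4 / (‖δ p.1 q.1‖ ^ 2 - ζ) *
        (inner ℝ (δ p.1 q.1) (y p) * inner ℝ (δ p.1 q.1) (y q)) with hQ
  set B : Matrix (Fin k × Fin n) (Fin k × Fin n) ℝ := fun p q =>
    if p.1 = q.1 then 0 else
      (‖δ p.1 q.1‖ ^ 2 - ζ + 2 * inner ℝ (δ p.1 q.1) (y p)) *
      (‖δ q.1 p.1‖ ^ 2 - ζ + 2 * inner ℝ (δ q.1 p.1) (y q)) / (‖δ p.1 q.1‖ ^ 2 - ζ) with hB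
  have hpos : ∀ a b, a ≠ b → 0 < ‖δ a b‖ ^ 2 - ζ := by
    intro a b hab
    have := h1 a b hab
    simp only [hδ]
    nlinarith
  have hB0 : ∀ p q, 0 ≤ B p q := by
    intro p q
    simp only [hB]
    split_ifs with h
    · exact le_rfl
    · refine div_nonneg (mul_nonneg ?_ ?_) (hpos _ _ h).le
      · have := h2 p.1 q.1 h p.2
        simp only [hδ]; linarith
      · have := h2 q.1 p.1 (Ne.symm h) q.2
        simp only [hδ]; linarith
  have hdec : ∀ p q, ‖x p - x q‖ ^ 2 = Q p q + B p q - n * ζ * (if p = q then 1 else 0)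
      + ‖y p‖ ^ 2 + ‖y q‖ ^ 2 + ζ := by
    intro p q
    simp only [hQ, hB]
    by_cases h : p.1 = q.1
    · simp only [h, if_true]
      rw [hx, hx, h, add_sub_add_left_eq_sub, norm_sub_sq_real]
      field_simp
      ring
    · simp only [h, if_false]
      have hp := (hpos _ _ h).ne'
      have e1 : x p - x q = δ p.1 q.1 + (y p - y q) := by rw [hx, hx]; simp only [hδ]; abel
      have e2 : δ q.1 p.1 = - δ p.1 q.1 := by simp only [hδ]; abel
      rw [e1, e2, norm_add_sq_real, norm_sub_sq_real (y p) (y q), inner_sub_right, norm_neg, inner_neg_left]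
      generalize ‖δ p.1 q.1‖ = d at *
      field_simp
      ring
  have hQpsd : ∀ v : Fin k × Fin n → ℝ, 0 ≤ ∑ p, ∑ q, Q p q * (v p * v q) := by
    intro v
    set w : Fin k → EuclideanSpace ℝ (Fin m) := fun a => ∑ i, v (a, i) • y (a, i) with hw
    have hq := quad_aux w δ Δ ζ hΔ hζ h1
    set V : Fin k → ℝ := fun a => ∑ i, v (a, i) ^ 2 - (n : ℝ)⁻¹ * (∑ i, v (a, i)) ^ 2 with hV
    have hc : ∀ a, ‖w a‖ ^ 2 ≤ n * s * V a := fun a =>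
      cluster_aux hn (fun i => y (a, i)) (fun i => v (a, i)) s hs (hy a) (h3 a)
    have hexp : ∑ p, ∑ q, Q p q * (v p * v q) = n * ζ * ∑ a, V a - 2 * ‖∑ a, w a‖ ^ 2
      + ∑ a, ∑ b, if a = b then 0 else
        4 / (‖δ a b‖ ^ 2 - ζ) * (inner ℝ (δ a b) (w a) * inner ℝ (δ a b) (w b)) := by
      have e1 : ∑ p, ∑ q, ((if p = q then (1:ℝ) else 0) - if p.1 = q.1 then (n : ℝ)⁻¹ else 0)
          * (v p * v q) = ∑ a, V a := by
        simp only [sub_mul, Finset.sum_sub_distrib, ite_mul, one_mul, zero_mul, Finset.sum_ite_eq,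
          Finset.mem_univ, if_true, hV]
        congr 1
        · rw [Fintype.sum_prod_type]
          simp only [pow_two]
        · simp only [sum_same _ (fun q => (n : ℝ)⁻¹ * (v _ * v q))]
          rw [Fintype.sum_prod_type]
          refine Finset.sum_congr rfl fun a _ => ?_
          simp only [← Finset.mul_sum, ← Finset.sum_mul, pow_two]
      have e2 : ∑ p, ∑ q, inner ℝ (y p) (y q) * (v p * v q) = ‖∑ a, w a‖ ^ 2 := by
        have : ∑ a, w a = ∑ p, v p • y p := by rw [Fintype.sum_prod_type]
        rw [this, ← real_inner_self_eq_norm_sq, sum_inner]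
        refine Finset.sum_congr rfl fun p _ => ?_
        rw [inner_sum]
        refine Finset.sum_congr rfl fun q _ => ?_
        rw [real_inner_smul_left, real_inner_smul_right]
        ring
      have e3 : ∑ p, ∑ q, (if p.1 = q.1 then 0 else 4 / (‖δ p.1 q.1‖ ^ 2 - ζ) *
        (inner ℝ (δ p.1 q.1) (y p) * inner ℝ (δ p.1 q.1) (y q))) * (v p * v q)
         = ∑ a, ∑ b, if a = b then 0 else
        4 / (‖δ a b‖ ^ 2 - ζ) * (inner ℝ (δ a b) (w a) * inner ℝ (δ a b) (w b)) := by
        simp only [Fintype.sum_prod_type]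
        refine Finset.sum_congr rfl fun a _ => ?_
        rw [Finset.sum_comm]
        refine Finset.sum_congr rfl fun b _ => ?_
        by_cases h : a = b
        · simp [h]
        · simp only [h, if_false, hw, inner_sum, real_inner_smul_right]
          rw [Finset.sum_mul_sum, Finset.mul_sum]
          refine Finset.sum_congr rfl fun i _ => ?_
          rw [Finset.mul_sum]
          refine Finset.sum_congr rfl fun j _ => ?_
          ring
      rw [← e1, ← e2, ← e3]
      simp only [hQ, Finset.mul_sum, ← Finset.sum_sub_distrib, ← Finset.sum_add_distrib]
      refine Finset.sum_congr rfl fun p _ => Finset.sum_congr rfl fun q _ => ?_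
      ring
    rw [hexp]
    have hk0 : ∀ a : Fin k, (0 : ℝ) ≤ 2 * k + 2 * Δ * (k - 1) := by
      intro a
      have : 0 < k := a.pos
      have : (1 : ℝ) ≤ k := by exact_mod_cast this
      have : 0 ≤ 2 * Δ * ((k : ℝ) - 1) := mul_nonneg (by linarith) (by linarith)
      positivity
    have hVn : ∀ a, 0 ≤ V a := by
      intro a
      have := sq_sum_le_card_mul_sum_sq (s := (Finset.univ : Finset (Fin n)))
        (f := fun i => v (a, i))
      simp only [Finset.card_univ, Fintype.card_fin] at this
      simp only [hV]
      rw [sub_nonneg, inv_mul_le_iff₀ (by positivity)]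
      exact this
    have hsum : (2 * k + 2 * Δ * (k - 1)) * ∑ a, ‖w a‖ ^ 2 ≤ n * ζ * ∑ a, V a := by
      rw [Finset.mul_sum, Finset.mul_sum]
      refine Finset.sum_le_sum fun a _ => ?_
      have i1 := mul_le_mul_of_nonneg_left (hc a) (hk0 a)
      have i2 := mul_le_mul_of_nonneg_right h4 (mul_nonneg (Nat.cast_nonneg n : (0:ℝ) ≤ n) (hVn a))
      nlinarith
    linarith
  have hQY := sum_mul_nonneg_of_quad Q Y hYpsd hQpsd
  have hBY : 0 ≤ ∑ p, ∑ q, B p q * Y p q :=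
    Finset.sum_nonneg fun p _ => Finset.sum_nonneg fun q _ => mul_nonneg (hB0 p q) (hY0 p q)
  have hrow : ∀ p, ∑ q, Y p q = 1 := fun p => by
    simpa [Matrix.mulVec, dotProduct] using congrFun hY1 p
  have hcol : ∀ q, ∑ p, Y p q = 1 := fun q => by
    rw [← hrow q]; exact Finset.sum_congr rfl fun p _ => hsym q p
  have hfin : ∑ p, ∑ q, ‖x p - x q‖ ^ 2 * Y q p = ∑ p, ∑ q, Q p q * Y p q
      + ∑ p, ∑ q, B p q * Y p q + 2 * ∑ p, ‖y p‖ ^ 2 := by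
    have f1 : ∑ p, ∑ q, (if p = q then (1:ℝ) else 0) * Y p q = k := by
      simp only [ite_mul, one_mul, zero_mul, Finset.sum_ite_eq, Finset.mem_univ, if_true]
      exact hYtr
    have f2 : ∑ p, ∑ q, ‖y p‖ ^ 2 * Y p q = ∑ p, ‖y p‖ ^ 2 := by
      simp only [← Finset.mul_sum, hrow, mul_one]
    have f3 : ∑ p, ∑ q, ‖y q‖ ^ 2 * Y p q = ∑ p, ‖y p‖ ^ 2 := by
      rw [Finset.sum_comm]
      simp only [← Finset.mul_sum, hcol, mul_one]
    have f4 : ∑ p : Fin k × Fin n, ∑ q, Y p q = k * n := by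
      simp [hrow]
    have : ∀ p q, ‖x p - x q‖ ^ 2 * Y q p = Q p q * Y p q + B p q * Y p q
      - n * ζ * ((if p = q then 1 else 0) * Y p q)
      + ‖y p‖ ^ 2 * Y p q + ‖y q‖ ^ 2 * Y p q + ζ * Y p q := by
      intro p q
      rw [hsym, hdec]
      ring
    simp only [this, Finset.sum_add_distrib, Finset.sum_sub_distrib]
    rw [f2, f3]
    simp only [← Finset.mul_sum]
    rw [f1, f4]
    ring
  rw [hfin]
  linarith

lemma hoeff {m k n : ℕ} (hn : 0 < n) (𝒟 : Measure (EuclideanSpace ℝ (Fin m)))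
    [IsProbabilityMeasure 𝒟] (f : EuclideanSpace ℝ (Fin m) → ℝ) (hf : Measurable f)
    (hb : ∀ᵐ r ∂𝒟, f r ∈ Set.Icc (-1 : ℝ) 1) (ε : ℝ) (hε : 0 < ε) (a : Fin k) :
    (Measure.pi fun _ : Fin k × Fin n => 𝒟) {r | n * ε ≤ ∑ i, (f (r (a, i)) - ∫ t, f t ∂𝒟)}
      ≤ ENNReal.ofReal (Real.exp (-(n * ε ^ 2 / 2))) := by
  set P := Measure.pi fun _ : Fin k × Fin n => 𝒟 with hP
  have hmp : ∀ p : Fin k × Fin n, MeasurePreserving (Function.eval p) P 𝒟 := fun p =>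
    measurePreserving_eval (fun _ : Fin k × Fin n => 𝒟) p
  have hind : ProbabilityTheory.iIndepFun
      (fun (p : Fin k × Fin n) ω => f (ω p) - ∫ t, f t ∂𝒟) P :=
    ProbabilityTheory.iIndepFun_pi (X := fun _ t => f t - ∫ t, f t ∂𝒟)
      (fun _ => (hf.sub_const _).aemeasurable)
  have hind2 := hind.precomp (g := fun i : Fin n => (a, i)) (Prod.mk_right_injective a)
  have hsub : ∀ i ∈ (Finset.univ : Finset (Fin n)), ProbabilityTheory.HasSubgaussianMGF
      (fun ω => f (ω (a, i)) - ∫ t, f t ∂𝒟) ((fun _ => 1 : Fin n → NNReal) i) P := by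
    intro i _
    have := ProbabilityTheory.hasSubgaussianMGF_of_mem_Icc (μ := P) (X := fun ω => f (ω (a, i)))
      (a := -1) (b := 1) (hf.comp (hmp (a, i)).measurable).aemeasurable
      ((hmp (a, i)).quasiMeasurePreserving.ae hb)
    have e : ∫ ω, f (ω (a, i)) ∂P = ∫ t, f t ∂𝒟 := by
      have := integral_map (μ := P) (φ := Function.eval (a, i)) (f := f)
        (measurable_pi_apply _).aemeasurable hf.aestronglyMeasurable
      rw [(hmp (a, i)).map_eq] at this
      exact this.symm
    rw [e] at this
    convert this using 1
    have : (1 : ℝ) - -1 = 2 := by norm_num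
    rw [this]
    ext
    simp
  have h := ProbabilityTheory.HasSubgaussianMGF.measure_sum_ge_le_of_iIndepFun hind2 hsub
    (ε := n * ε) (by positivity)
  rw [← ENNReal.ofReal_toReal (measure_ne_top P _)]
  refine ENNReal.ofReal_le_ofReal (h.trans (le_of_eq ?_))
  congr 1
  simp
  field_simp

lemma hoeff2 {m k n : ℕ} (hn : 0 < n) (𝒟 : Measure (EuclideanSpace ℝ (Fin m)))
    [IsProbabilityMeasure 𝒟] (f : EuclideanSpace ℝ (Fin m) → ℝ) (hf : Measurable f)
    (hb : ∀ᵐ r ∂𝒟, f r ∈ Set.Icc (-1 : ℝ) 1) (ε : ℝ) (hε : 0 < ε) (a : Fin k) :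
    (Measure.pi fun _ : Fin k × Fin n => 𝒟)
      {r | n * ε ≤ |∑ i, f (r (a, i)) - n * ∫ t, f t ∂𝒟|}
      ≤ 2 * ENNReal.ofReal (Real.exp (-(n * ε ^ 2 / 2))) := by
  have h1 := hoeff (n := n) hn 𝒟 f hf hb ε hε a
  have h2 := hoeff (n := n) hn 𝒟 (fun r => - f r) hf.neg
    (hb.mono fun r hr => ⟨by linarith [hr.2], by linarith [hr.1]⟩) ε hε a
  rw [two_mul]
  refine le_trans (measure_mono ?_) ((measure_union_le _ _).trans (add_le_add h1 h2))
  intro r hr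
  simp only [Set.mem_ofPred_eq, Set.mem_union, integral_neg, Finset.sum_sub_distrib,
    Finset.sum_neg_distrib, Finset.sum_const, Finset.card_univ, Fintype.card_fin, nsmul_eq_mul]
    at hr ⊢
  rcases le_abs.1 hr with h | h
  · left; exact h
  · right; linarith

lemma coord_le {m : ℕ} (r : EuclideanSpace ℝ (Fin m)) (i : Fin m) : |r i| ≤ ‖r‖ := by
  simpa using PiLp.norm_apply_le r i

lemma integral_rot {m : ℕ} (𝒟 : Measure (EuclideanSpace ℝ (Fin m)))
    (hrot : ∀ T : EuclideanSpace ℝ (Fin m) ≃ₗᵢ[ℝ] EuclideanSpace ℝ (Fin m),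
      𝒟.map T = 𝒟) (f : EuclideanSpace ℝ (Fin m) → ℝ) (hf : Measurable f)
    (T : EuclideanSpace ℝ (Fin m) ≃ₗᵢ[ℝ] EuclideanSpace ℝ (Fin m)) :
    ∫ r, f (T r) ∂𝒟 = ∫ r, f r ∂𝒟 := by
  have := integral_map (μ := 𝒟) (φ := T) (f := f)
        T.continuous.aemeasurable hf.aestronglyMeasurable
  rw [hrot T] at this
  exact this.symm

lemma mean_zero {m : ℕ} (𝒟 : Measure (EuclideanSpace ℝ (Fin m)))
    (hrot : ∀ T : EuclideanSpace ℝ (Fin m) ≃ₗᵢ[ℝ] EuclideanSpace ℝ (Fin m),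
      𝒟.map T = 𝒟) (i : Fin m) : ∫ r, r i ∂𝒟 = 0 := by
  have := integral_rot 𝒟 hrot (fun r => r i) (by fun_prop) (LinearIsometryEquiv.neg ℝ)
  simp only [LinearIsometryEquiv.coe_neg, PiLp.neg_apply, integral_neg] at this
  linarith

lemma cov_zero {m : ℕ} (𝒟 : Measure (EuclideanSpace ℝ (Fin m)))
    (hrot : ∀ T : EuclideanSpace ℝ (Fin m) ≃ₗᵢ[ℝ] EuclideanSpace ℝ (Fin m),
      𝒟.map T = 𝒟) (i j : Fin m) (hij : i ≠ j) : ∫ r, r i * r j ∂𝒟 = 0 := by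
  have := integral_rot 𝒟 hrot (fun r => r i * r j) (by fun_prop)
    (LinearIsometryEquiv.piLpCongrRight 2 (fun l => if l = i then LinearIsometryEquiv.neg ℝ else
      LinearIsometryEquiv.refl ℝ ℝ))
  simp [hij.symm, integral_neg] at this
  linarith

lemma var_le {m : ℕ} (hm : 0 < m) (𝒟 : Measure (EuclideanSpace ℝ (Fin m)))
    [IsProbabilityMeasure 𝒟]
    (hrot : ∀ T : EuclideanSpace ℝ (Fin m) ≃ₗᵢ[ℝ] EuclideanSpace ℝ (Fin m),
      𝒟.map T = 𝒟) (hb : ∀ᵐ r ∂𝒟, ‖r‖ ≤ 1) (i : Fin m) :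
    ∫ r, r i * r i ∂𝒟 ≤ 1 / m := by
  have heq : ∀ j : Fin m, ∫ r, r j * r j ∂𝒟 = ∫ r, r i * r i ∂𝒟 := by
    intro j
    have := integral_rot 𝒟 hrot (fun r => r i * r i) (by fun_prop)
      (LinearIsometryEquiv.piLpCongrLeft 2 ℝ ℝ (Equiv.swap i j))
    simp [LinearIsometryEquiv.piLpCongrLeft_apply, Equiv.piCongrLeft'_apply] at this
    exact this
  have hint : ∀ j : Fin m, Integrable (fun r : EuclideanSpace ℝ (Fin m) => r j * r j) 𝒟 := by
    intro j
    refine Integrable.of_bound (by fun_prop) 1 ?_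
    filter_upwards [hb] with r hr
    have := coord_le r j
    rw [Real.norm_eq_abs, abs_mul]
    exact mul_le_one₀ (this.trans hr) (abs_nonneg _) (this.trans hr)
  have hsum : ∑ j : Fin m, ∫ r, r j * r j ∂𝒟 ≤ 1 := by
    rw [← integral_finsetSum _ (fun j _ => hint j)]
    calc _ ≤ ∫ r, (1 : ℝ) ∂𝒟 := by
          refine integral_mono_ae (integrable_finsetSum _ (fun j _ => hint j))
            (integrable_const _) ?_
          filter_upwards [hb] with r hr
          have : ∑ j, r j * r j = ‖r‖ ^ 2 := by
            rw [EuclideanSpace.real_norm_sq_eq]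
            simp only [pow_two]
          simp only [this]
          exact pow_le_one₀ (norm_nonneg _) hr
      _ = 1 := by simp
  simp only [heq, Finset.sum_const, Finset.card_univ, Fintype.card_fin, nsmul_eq_mul] at hsum
  rw [le_div_iff₀ (by positivity)]
  linarith

lemma good_solves {m k n : ℕ} (hn : 0 < n)
    (γ : Fin k → EuclideanSpace ℝ (Fin m)) (r : Fin k × Fin n → EuclideanSpace ℝ (Fin m))
    (X : Matrix (Fin k × Fin n) (Fin k × Fin n) ℝ)
    (hX : ∀ p q, X p q = if p.1 = q.1 then ((n : ℝ))⁻¹ else 0)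
    (Δ ε : ℝ) (hε : 0 < ε) (E : Fin m → Fin m → ℝ)
    (hE0 : ∀ i j, i ≠ j → E i j = 0) (hE1 : ∀ i, E i i ≤ 1 / m)
    (hΔ : 2 < Δ) (hγ : ∀ a b, a ≠ b → Δ + 4 * (m * ε) ≤ ‖γ a - γ b‖)
    (hs : (1 / m + m * ε) * (2 * k + 2 * Δ * (k - 1)) ≤ Δ * (Δ - 2))
    (hr : ∀ p, ‖r p‖ ≤ 1)
    (h1 : ∀ a j, |∑ i, r (a, i) j| ≤ n * ε)
    (h2 : ∀ a j l, |∑ i, r (a, i) j * r (a, i) l - n * E j l| ≤ n * ε) :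
    SolvesSDP k (fun p : Fin k × Fin n => γ p.1 + r p) X := by
  have hn' : (n : ℝ) ≠ 0 := by positivity
  set rb : Fin k → EuclideanSpace ℝ (Fin m) := fun a => (n : ℝ)⁻¹ • ∑ i, r (a, i) with hrb
  have hrbn : ∀ a, ‖rb a‖ ≤ m * ε := by
    intro a
    refine abs_le_of_sq_le_sq' ?_ (by positivity) |>.2
    rw [EuclideanSpace.real_norm_sq_eq]
    have : ∀ j, rb a j ^ 2 ≤ ε ^ 2 := by
      intro j
      rw [sq_le_sq, abs_of_pos hε]
      simp only [hrb, PiLp.smul_apply, WithLp.ofLp_sum, Finset.sum_apply, smul_eq_mul, abs_mul, abs_inv, Nat.abs_cast]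
      rw [inv_mul_le_iff₀ (by positivity)]
      exact h1 a j
    calc _ ≤ ∑ j : Fin m, ε ^ 2 := Finset.sum_le_sum fun j _ => this j
      _ = m * ε ^ 2 := by simp
      _ ≤ (m * ε) ^ 2 := by
        rw [mul_pow]
        gcongr
        have : (m : ℕ) ≤ m ^ 2 := by nlinarith [Nat.zero_le m, sq_nonneg (m:ℤ), Nat.le_self_pow two_ne_zero m]
        exact_mod_cast this
  have hδ : ∀ a b, a ≠ b → Δ + 2 * (m * ε) ≤ ‖(γ a + rb a) - (γ b + rb b)‖ := by
    intro a b hab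
    have e : γ a - γ b = ((γ a + rb a) - (γ b + rb b)) - rb a + rb b := by abel
    have := hγ a b hab
    rw [e] at this
    have i1 := norm_add_le (((γ a + rb a) - (γ b + rb b)) - rb a) (rb b)
    have i2 := norm_sub_le ((γ a + rb a) - (γ b + rb b)) (rb a)
    linarith [hrbn a, hrbn b]
  have hmε : 0 ≤ m * ε := by positivity
  refine certificate hn _ (fun p => r p - rb p.1) (fun a => γ a + rb a) Δ (Δ * (Δ - 2))
    (1 / m + m * ε) (by positivity) X hX ?_ ?_ hΔ rfl ?_ ?_ ?_ hs
  · intro p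
    abel
  · intro a
    simp only [Finset.sum_sub_distrib, Finset.sum_const, Finset.card_univ, Fintype.card_fin, hrb]
    rw [← Nat.cast_smul_eq_nsmul ℝ, smul_smul, mul_inv_cancel₀ hn', one_smul, sub_self]
  · intro a b hab
    linarith [hδ a b hab]
  · intro a b hab i
    have hd := hδ a b hab
    set d := (γ a + rb a) - (γ b + rb b) with hdd
    have i1 := (abs_le.1 (abs_real_inner_le_norm d (r (a, i) - rb a))).1
    have i2 : ‖r (a, i) - rb a‖ ≤ 1 + m * ε :=
      (norm_sub_le _ _).trans (add_le_add (hr _) (hrbn a))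
    have i3 : ‖d‖ * ‖r (a, i) - rb a‖ ≤ ‖d‖ * (1 + m * ε) := by gcongr
    have i4 : Δ * (Δ - 2) ≤ ‖d‖ * (‖d‖ - 2 * (1 + m * ε)) := by
      apply mul_le_mul <;> linarith
    simp only
    nlinarith
  · intro a w
    have j1 : ∑ i, (inner ℝ (r (a, i) - rb a) w) ^ 2 ≤ ∑ i, (inner ℝ (r (a, i)) w) ^ 2 := by
      have e : inner ℝ (rb a) w = (n : ℝ)⁻¹ * ∑ i, inner ℝ (r (a, i)) w := by
        simp only [hrb, real_inner_smul_left, sum_inner]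
      simp only [inner_sub_left, e]
      generalize hM : ∑ i, inner ℝ (r (a, i)) w = M
      simp only [sub_sq, Finset.sum_add_distrib, Finset.sum_sub_distrib, ← Finset.mul_sum,
        ← Finset.sum_mul, hM, Finset.sum_const, Finset.card_univ, Fintype.card_fin, nsmul_eq_mul]
      have : 2 * M * ((n : ℝ)⁻¹ * M) = 2 * (n : ℝ)⁻¹ * M ^ 2 := by ring
      have h' : (n : ℝ) * ((n : ℝ)⁻¹ * M) ^ 2 = (n : ℝ)⁻¹ * M ^ 2 := by field_simp
      rw [this, h']
      have : 0 ≤ (n : ℝ)⁻¹ * M ^ 2 := by positivity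
      linarith
    refine j1.trans ?_
    have j2 : ∑ i, (inner ℝ (r (a, i)) w) ^ 2
        = ∑ j, ∑ l, w j * w l * ∑ i, r (a, i) j * r (a, i) l := by
      have : ∀ i, (inner ℝ (r (a, i)) w) ^ 2 = ∑ j, ∑ l, w j * w l * (r (a, i) j * r (a, i) l) := by
        intro i
        rw [PiLp.inner_apply, pow_two, Finset.sum_mul_sum]
        refine Finset.sum_congr rfl fun j _ => Finset.sum_congr rfl fun l _ => ?_
        simp
        ring
      simp only [this]
      rw [Finset.sum_comm]
      refine Finset.sum_congr rfl fun j _ => ?_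
      rw [Finset.sum_comm]
      refine Finset.sum_congr rfl fun l _ => ?_
      rw [Finset.mul_sum]
    rw [j2]
    have j3 : ∀ j l, w j * w l * ∑ i, r (a, i) j * r (a, i) l
        ≤ (if j = l then n * (1 / m) * w j ^ 2 else 0) + n * ε * (|w j| * |w l|) := by
      intro j l
      have t1 := h2 a j l
      have t2 : w j * w l * (∑ i, r (a, i) j * r (a, i) l - n * E j l) ≤ n * ε * (|w j| * |w l|) := by
        refine (le_abs_self _).trans ?_
        rw [abs_mul, abs_mul, mul_comm]
        gcongr
      have t3 : w j * w l * (n * E j l) ≤ if j = l then n * (1 / m) * w j ^ 2 else 0 := by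
        split_ifs with h
        · subst h
          have := mul_le_mul_of_nonneg_left (hE1 j) (by positivity : 0 ≤ n * w j ^ 2)
          nlinarith
        · rw [hE0 j l h]; simp
      linarith
    refine (Finset.sum_le_sum fun j _ => Finset.sum_le_sum fun l _ => j3 j l).trans ?_
    simp only [Finset.sum_add_distrib, Finset.sum_ite_eq, Finset.mem_univ, if_true,
      ← Finset.mul_sum]
    rw [← Finset.sum_mul, ← EuclideanSpace.real_norm_sq_eq]
    have j4 := sq_sum_le_card_mul_sum_sq (s := (Finset.univ : Finset (Fin m))) (f := fun j => |w j|)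
    simp only [sq_abs, Finset.card_univ, Fintype.card_fin] at j4
    rw [← EuclideanSpace.real_norm_sq_eq] at j4
    have j5 := mul_le_mul_of_nonneg_left j4 (by positivity : 0 ≤ n * ε)
    nlinarith

/-- Test functions. -/
noncomputable def testFun {m : ℕ} : Fin m ⊕ Fin m × Fin m → EuclideanSpace ℝ (Fin m) → ℝ
  | Sum.inl i, r => r i
  | Sum.inr p, r => r p.1 * r p.2

lemma testFun_meas {m : ℕ} (j : Fin m ⊕ Fin m × Fin m) : Measurable (testFun j) := by
  rcases j with i | p
  · change Measurable fun r : EuclideanSpace ℝ (Fin m) => r i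
    fun_prop
  · change Measurable fun r : EuclideanSpace ℝ (Fin m) => r p.1 * r p.2
    fun_prop

lemma testFun_bound {m : ℕ} (j : Fin m ⊕ Fin m × Fin m) (r : EuclideanSpace ℝ (Fin m))
    (hr : ‖r‖ ≤ 1) : testFun j r ∈ Set.Icc (-1 : ℝ) 1 := by
  rw [Set.mem_Icc, ← abs_le]
  rcases j with i | p
  · exact (coord_le r i).trans hr
  · simp only [testFun, abs_mul]
    exact mul_le_one₀ ((coord_le r _).trans hr) (abs_nonneg _) ((coord_le r _).trans hr)

theorem SDP_recovers_planted_clusters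
    (m k : ℕ) (hm : 0 < m) (hk : 1 < k)
    (γ : Fin k → EuclideanSpace ℝ (Fin m))
    (𝒟 : Measure (EuclideanSpace ℝ (Fin m))) [IsProbabilityMeasure 𝒟]
    (hrot : ∀ T : EuclideanSpace ℝ (Fin m) ≃ₗᵢ[ℝ] EuclideanSpace ℝ (Fin m),
      𝒟.map T = 𝒟)
    (hball : 𝒟 {r | ‖r‖ ≤ 1} = 1)
    (hfull : sSup {t : ℝ | 0 < 𝒟 {r | t ≤ ‖r‖}} = 1)
    (hΔ : ∀ a b : Fin k, a ≠ b → 2 + (k : ℝ) ^ 2 / m < ‖γ a - γ b‖) :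
    ∃ c : ℝ, 0 < c ∧ ∃ n₀ : ℕ, ∀ n : ℕ, n₀ ≤ n →
      ENNReal.ofReal (1 - Real.exp (-c * n)) ≤
        (Measure.pi fun _ : Fin k × Fin n => 𝒟)
          {r | SolvesSDP k (fun p : Fin k × Fin n => γ p.1 + r p)
              (fun p q => if p.1 = q.1 then ((n : ℝ))⁻¹ else 0)} := by
  have hb : ∀ᵐ r ∂𝒟, ‖r‖ ≤ 1 := by
    rw [ae_iff_prob_eq_one (by fun_prop)]
    exact hball
  have hm' : (0 : ℝ) < m := by exact_mod_cast hm
  have hk' : (2 : ℝ) ≤ k := by exact_mod_cast hk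
  set Δ : ℝ := 2 + (k : ℝ) ^ 2 / m with hΔdef
  have hΔ2 : 2 < Δ := by
    have : 0 < (k : ℝ) ^ 2 / m := by positivity
    linarith
  obtain ⟨g, hg, hgap⟩ : ∃ g : ℝ, 0 < g ∧ ∀ a b, a ≠ b → Δ + g ≤ ‖γ a - γ b‖ := by
    obtain ⟨g, hg, h⟩ := Pi.exists_forall_pos_add_lt (ι := Fin k × Fin k) (x := fun _ => Δ)
      (y := fun p => if p.1 = p.2 then Δ + 1 else ‖γ p.1 - γ p.2‖) (by
        intro p
        split_ifs with h
        · linarith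
        · exact hΔ _ _ h)
    refine ⟨g, hg, fun a b hab => ?_⟩
    have := h (a, b)
    simp only [hab, if_false] at this
    exact this.le
  set R : ℝ := 2 * k + 2 * Δ * (k - 1) with hR
  have hRpos : 0 < R := by
    have : 0 ≤ 2 * Δ * ((k : ℝ) - 1) := mul_nonneg (by linarith) (by linarith)
    linarith
  have hgap2 : 0 < Δ * (Δ - 2) - 1 / m * R := by
    have e : Δ * (Δ - 2) - 1 / m * R = (Δ * k ^ 2 - R) / m := by
      have : Δ - 2 = (k : ℝ) ^ 2 / m := by rw [hΔdef]; ring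
      rw [this]; ring
    rw [e]
    refine div_pos ?_ hm'
    rw [hR]
    have q : 0 < (k : ℝ) ^ 2 - 2 * k + 2 := by nlinarith [sq_nonneg ((k : ℝ) - 1)]
    have := mul_lt_mul_of_pos_right hΔ2 q
    nlinarith [mul_nonneg (by linarith : (0:ℝ) ≤ k - 1) (by linarith : (0:ℝ) ≤ k - 2)]
  obtain ⟨ε, hε, hε1, hε2⟩ : ∃ ε : ℝ, 0 < ε ∧ 4 * (m * ε) ≤ g ∧
      m * ε * R ≤ Δ * (Δ - 2) - 1 / m * R := by
    refine ⟨min (g / (4 * m)) ((Δ * (Δ - 2) - 1 / m * R) / (m * R)), ?_, ?_, ?_⟩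
    · refine lt_min (by positivity) (by positivity)
    · have := min_le_left (g / (4 * m)) ((Δ * (Δ - 2) - 1 / m * R) / (m * R))
      rw [le_div_iff₀ (by positivity)] at this
      linarith
    · have := min_le_right (g / (4 * m)) ((Δ * (Δ - 2) - 1 / m * R) / (m * R))
      rw [le_div_iff₀ (by positivity)] at this
      linarith
  set K : ℕ := k * (m + m * m) * 2 with hK
  refine ⟨ε ^ 2 / 4, by positivity, max 1 ⌈4 * K / ε ^ 2⌉₊, fun n hn => ?_⟩
  have hn1 : 0 < n := lt_of_lt_of_le one_pos ((le_max_left _ _).trans hn)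
  have hn2 : 4 * K / ε ^ 2 ≤ n :=
    (Nat.le_ceil _).trans (by exact_mod_cast (le_max_right _ _).trans hn)
  set P := Measure.pi fun _ : Fin k × Fin n => 𝒟 with hP
  set S := {r : Fin k × Fin n → EuclideanSpace ℝ (Fin m) |
    SolvesSDP k (fun p : Fin k × Fin n => γ p.1 + r p)
              (fun p q => if p.1 = q.1 then ((n : ℝ))⁻¹ else 0)} with hS
  set Bad : Fin k × (Fin m ⊕ Fin m × Fin m) → Set (Fin k × Fin n → EuclideanSpace ℝ (Fin m)) :=
    fun t => {r | n * ε ≤ |∑ i, testFun t.2 (r (t.1, i)) - n * ∫ u, testFun t.2 u ∂𝒟|} with hBad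
  have hball' : ∀ᵐ r ∂P, ∀ p, ‖r p‖ ≤ 1 := by
    rw [ae_all_iff]
    intro p
    exact (measurePreserving_eval (fun _ : Fin k × Fin n => 𝒟) p).quasiMeasurePreserving.ae hb
  have hcover : P Set.univ ≤ P (S ∪ ⋃ t, Bad t) := by
    refine measure_mono_ae ?_
    filter_upwards [hball'] with r hr _
    by_cases hbad : r ∈ ⋃ t, Bad t
    · exact Or.inr hbad
    · left
      simp only [hBad, Set.mem_iUnion, not_exists, Set.mem_ofPred_eq, not_le] at hbad
      refine good_solves hn1 γ r _ (fun _ _ => rfl) Δ ε hε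
        (fun i j => ∫ u, u i * u j ∂𝒟) (fun i j h => cov_zero 𝒟 hrot i j h)
        (fun i => var_le hm 𝒟 hrot hb i) hΔ2
        (fun a b hab => le_trans (by linarith) (hgap a b hab)) (by rw [← hR]; linarith) hr ?_ ?_
      · intro a j
        have := (hbad (a, Sum.inl j)).le
        simp only [testFun, mean_zero 𝒟 hrot j, mul_zero, sub_zero] at this
        exact this
      · intro a j l
        exact (hbad (a, Sum.inr (j, l))).le
  have hBadle : P (⋃ t, Bad t) ≤ ENNReal.ofReal (Real.exp (-(ε ^ 2 / 4) * n)) := by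
    refine (measure_iUnion_fintype_le P Bad).trans ?_
    calc _ ≤ ∑ t : Fin k × (Fin m ⊕ Fin m × Fin m),
          2 * ENNReal.ofReal (Real.exp (-(n * ε ^ 2 / 2))) :=
          Finset.sum_le_sum fun t _ => hoeff2 hn1 𝒟 (testFun t.2) (testFun_meas _)
            (hb.mono fun r hr => testFun_bound _ r hr) ε hε t.1
      _ = ENNReal.ofReal (K * Real.exp (-(n * ε ^ 2 / 2))) := by
          rw [ENNReal.ofReal_mul (by positivity), ENNReal.ofReal_natCast]
          simp [hK]
          ring
      _ ≤ _ := by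
          refine ENNReal.ofReal_le_ofReal ?_
          have h1 : (K : ℝ) ≤ n * ε ^ 2 / 4 := by
            rw [div_le_iff₀ (by positivity)] at hn2
            linarith
          have h2 : (K : ℝ) ≤ Real.exp (n * ε ^ 2 / 4) := by
            linarith [Real.add_one_le_exp (n * ε ^ 2 / 4)]
          calc _ ≤ Real.exp (n * ε ^ 2 / 4) * Real.exp (-(n * ε ^ 2 / 2)) := by gcongr
            _ = _ := by
              rw [← Real.exp_add]
              congr 1
              ring
  rw [ENNReal.ofReal_sub _ (Real.exp_pos _).le, ENNReal.ofReal_one, tsub_le_iff_right]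
  calc (1 : ℝ≥0∞) = P Set.univ := by simp [hP]
    _ ≤ P S + P (⋃ t, Bad t) := hcover.trans (measure_union_le _ _)
    _ ≤ _ := by gcongr
end

section
/- Let q₀ be drawn uniformly at random from the unit sphere in ℝⁿ, and let ε > 0 satisfy ε ≥ n^{−1}·e^{−2n}. Then the probability that (e₁ᵀq₀)² < ε is at most 3·√(nε), where e₁ denotes the first standard basis vector. -/
open MeasureTheory

open ProbabilityTheory in
lemma sfc_gauss_le (t : ℝ) :
    gaussianReal 0 1 (Set.Ioo (-t) t) ≤ ENNReal.ofReal (2 * t) := by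
  rw [gaussianReal_apply 0 one_ne_zero]
  calc ∫⁻ x in Set.Ioo (-t) t, gaussianPDF 0 1 x
      ≤ ∫⁻ x in Set.Ioo (-t) t, 1 := by
        apply lintegral_mono
        intro x
        simp only [gaussianPDF]
        rw [ENNReal.ofReal_le_one, gaussianPDFReal_def]
        have h1 : (1:ℝ) ≤ Real.sqrt (2 * Real.pi * (1:NNReal)) := by
          rw [Real.one_le_sqrt]
          have := Real.pi_gt_three
          simp; linarith
        have h2 : (Real.sqrt (2 * Real.pi * (1:NNReal)))⁻¹ ≤ 1 := inv_le_one_of_one_le₀ h1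
        have h3 : Real.exp (-(x - 0) ^ 2 / (2 * (1:NNReal))) ≤ 1 := by
          rw [Real.exp_le_one_iff]
          simp
          nlinarith [sq_nonneg x]
        exact mul_le_one₀ h2 (Real.exp_nonneg _) h3
    _ = ENNReal.ofReal (2 * t) := by
        rw [setLIntegral_one, Real.volume_Ioo]; congr 1; ring

open ProbabilityTheory in
lemma sfc_sq : ∫⁻ x, ENNReal.ofReal (x ^ 2) ∂(gaussianReal 0 1) = 1 := by
  have hv := variance_fun_id_gaussianReal (μ := 0) (v := 1)
  rw [variance_eq_integral (by fun_prop)] at hv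
  simp only [integral_id_gaussianReal, sub_zero] at hv
  rw [← ofReal_integral_eq_lintegral_ofReal]
  · simp [hv]
  · exact (memLp_id_gaussianReal 2).integrable_sq
  · exact Filter.Eventually.of_forall fun x => sq_nonneg x

open ProbabilityTheory in
lemma sfc_sum (k : ℕ) :
    ∫⁻ h : Fin k → ℝ, ENNReal.ofReal (∑ i, h i ^ 2) ∂(Measure.pi fun _ => gaussianReal 0 1)
      = k := by
  have : ∀ h : Fin k → ℝ, ENNReal.ofReal (∑ i, h i ^ 2) = ∑ i, ENNReal.ofReal (h i ^ 2) :=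
    fun h => ENNReal.ofReal_sum_of_nonneg (fun i _ => sq_nonneg _)
  simp_rw [this]
  rw [lintegral_finsetSum _ (by fun_prop)]
  have h2 : ∀ i : Fin k, ∫⁻ h : Fin k → ℝ, ENNReal.ofReal (h i ^ 2)
      ∂(Measure.pi fun _ => gaussianReal 0 1) = 1 := by
    intro i
    rw [← sfc_sq]
    exact (measurePreserving_eval (fun _ : Fin k => gaussianReal 0 1) i).lintegral_comp
      (f := fun x => ENNReal.ofReal (x ^ 2)) (by fun_prop)
  simp [h2]

open ProbabilityTheory in
lemma sfc_pi (k : ℕ) (ε : ℝ) (h0 : 0 < ε) (h1 : 9 * ((k + 1 : ℕ) * ε) < 1) :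
    (Measure.pi fun _ : Fin (k + 1) => gaussianReal 0 1)
      {x | x 0 ^ 2 < ε * ∑ i, x i ^ 2} ≤ ENNReal.ofReal (3 * Real.sqrt ((k + 1 : ℕ) * ε)) := by
  have hmp := measurePreserving_piFinSuccAbove (fun _ : Fin (k + 1) => gaussianReal 0 1) 0
  set B : Set (ℝ × (Fin k → ℝ)) := {p | p.1 ^ 2 < ε * (p.1 ^ 2 + ∑ i, p.2 i ^ 2)} with hB
  have hBm : MeasurableSet B := measurableSet_lt (by fun_prop) (by fun_prop)
  have hpre : {x : Fin (k + 1) → ℝ | x 0 ^ 2 < ε * ∑ i, x i ^ 2}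
      = (MeasurableEquiv.piFinSuccAbove (fun _ => ℝ) 0) ⁻¹' B := by
    ext x
    simp [hB, Fin.sum_univ_succ, MeasurableEquiv.piFinSuccAbove, Fin.tail]
  rw [hpre, hmp.measure_preimage hBm.nullMeasurableSet, Measure.prod_apply_symm hBm]
  set N : ℝ := ((k + 1 : ℕ) : ℝ) with hN
  have hN1 : 1 ≤ N := by simp [hN]
  set c : ℝ := 3 / 2 * Real.sqrt ε / Real.sqrt N with hc
  have hsN : 0 < Real.sqrt N := Real.sqrt_pos.2 (by linarith)
  have hcpos : 0 ≤ c := by positivity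
  calc _ ≤ ∫⁻ h : Fin k → ℝ, ENNReal.ofReal c *
            (ENNReal.ofReal (∑ i, h i ^ 2) + ENNReal.ofReal N)
          ∂(Measure.pi fun _ => gaussianReal 0 1) := by
        apply lintegral_mono
        intro h
        have hS : 0 ≤ ∑ i, h i ^ 2 := Finset.sum_nonneg fun i _ => sq_nonneg _
        set S := ∑ i, h i ^ 2 with hSdef
        have hsub : (fun x => (x, h)) ⁻¹' B ⊆
            Set.Ioo (-(3 / 2 * Real.sqrt (ε * S))) (3 / 2 * Real.sqrt (ε * S)) := by
          intro a ha
          have ha' : a ^ 2 < ε * (a ^ 2 + S) := ha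
          have hε9 : ε < 1 / 9 := by nlinarith
          have hsq := Real.sq_sqrt (mul_nonneg h0.le hS)
          have hlt : a ^ 2 < (3 / 2 * Real.sqrt (ε * S)) ^ 2 := by
            rw [mul_pow, hsq]
            nlinarith [sq_nonneg a]
          exact abs_lt.1 (abs_lt_of_sq_lt_sq hlt (by positivity))
        refine (measure_mono hsub).trans ((sfc_gauss_le _).trans ?_)
        change _ ≤ ENNReal.ofReal c * (ENNReal.ofReal S + ENNReal.ofReal N)
        rw [← ENNReal.ofReal_add hS (by linarith), ← ENNReal.ofReal_mul hcpos]
        apply ENNReal.ofReal_le_ofReal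
        rw [Real.sqrt_mul h0.le, hc, div_mul_eq_mul_div _ (Real.sqrt N), le_div_iff₀ hsN]
        have e1 := Real.sq_sqrt hS
        have e2 := Real.sq_sqrt (show 0 ≤ N by linarith)
        have e3 : 2 * (Real.sqrt S * Real.sqrt N) ≤ S + N := by
          nlinarith [sq_nonneg (Real.sqrt S - Real.sqrt N)]
        nlinarith [mul_le_mul_of_nonneg_left e3 (Real.sqrt_nonneg ε)]
    _ = ENNReal.ofReal c * (k + ENNReal.ofReal N) := by
        rw [lintegral_const_mul _ (by fun_prop), lintegral_add_right _ (by fun_prop), sfc_sum]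
        simp
    _ ≤ ENNReal.ofReal (3 * Real.sqrt (N * ε)) := by
        rw [← ENNReal.ofReal_natCast, ← ENNReal.ofReal_add (by positivity) (by linarith),
          ← ENNReal.ofReal_mul hcpos]
        apply ENNReal.ofReal_le_ofReal
        have hk : (k : ℝ) ≤ N := by simp [hN]
        rw [Real.sqrt_mul (by linarith), hc, div_mul_eq_mul_div, div_le_iff₀ hsN]
        have e2 := Real.sq_sqrt (show 0 ≤ N by linarith)
        have : 3 * (Real.sqrt N * Real.sqrt ε) * Real.sqrt N = 3 * Real.sqrt ε * N := by
          linear_combination (3 * Real.sqrt ε) * e2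
        rw [this]
        nlinarith [Real.sqrt_nonneg ε]

lemma sfc_rot (k : ℕ) (ν : Measure (EuclideanSpace ℝ (Fin (k + 1))))
    (hrot : ∀ T : EuclideanSpace ℝ (Fin (k + 1)) ≃ₗᵢ[ℝ] EuclideanSpace ℝ (Fin (k + 1)),
      ν.map T = ν) (ε : ℝ) (u : EuclideanSpace ℝ (Fin (k + 1))) (hu : u ≠ 0) :
    ν {v | (inner ℝ v u) ^ 2 < ε * ‖v‖ ^ 2 * ‖u‖ ^ 2} = ν {v | v 0 ^ 2 < ε * ‖v‖ ^ 2} := by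
  set w : EuclideanSpace ℝ (Fin (k + 1)) := ‖u‖ • EuclideanSpace.single 0 1 with hw
  have hun : 0 < ‖u‖ := norm_pos_iff.2 hu
  have hwn : ‖w‖ = ‖u‖ := by simp [hw, norm_smul]
  set T := (ℝ ∙ (w - u))ᗮ.reflection with hT
  have hTw : T w = u := Submodule.reflection_sub hwn
  conv_lhs => rw [← hrot T]
  rw [Measure.map_apply T.continuous.measurable (measurableSet_lt (by fun_prop) (by fun_prop))]
  congr 1
  ext v
  simp only [Set.mem_preimage, Set.mem_setOf_eq, T.norm_map]
  rw [← hTw, T.inner_map_map, T.norm_map, hwn]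
  have : inner ℝ v w = ‖u‖ * v 0 := by simp [hw, inner_smul_right, EuclideanSpace.inner_single_right]
  rw [this, mul_pow, mul_comm (‖u‖ ^ 2)]
  exact mul_lt_mul_iff_left₀ (by positivity)

open ProbabilityTheory in
lemma sfc_main (k : ℕ)
    (μ : Measure (EuclideanSpace ℝ (Fin (k + 1)))) [IsProbabilityMeasure μ]
    (hsupp : ∀ᵐ v ∂μ, ‖v‖ = 1)
    (hrot : ∀ T : EuclideanSpace ℝ (Fin (k + 1)) ≃ₗᵢ[ℝ] EuclideanSpace ℝ (Fin (k + 1)),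
      μ.map T = μ)
    (ε : ℝ) (h0 : 0 < ε) (h1 : 9 * ((k + 1 : ℕ) * ε) < 1) :
    μ {v | v 0 ^ 2 < ε} ≤ ENNReal.ofReal (3 * Real.sqrt ((k + 1 : ℕ) * ε)) := by
  set γ := stdGaussian (EuclideanSpace ℝ (Fin (k + 1))) with hγ
  have hp : μ {v | v 0 ^ 2 < ε} = μ {v | v 0 ^ 2 < ε * ‖v‖ ^ 2} := by
    apply measure_congr
    filter_upwards [hsupp] with v hv
    apply propext
    change v 0 ^ 2 < ε ↔ v 0 ^ 2 < ε * ‖v‖ ^ 2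
    simp [hv]
  have hmeas : MeasurableSet {x : EuclideanSpace ℝ (Fin (k + 1)) | x 0 ^ 2 < ε * ‖x‖ ^ 2} :=
    measurableSet_lt (by fun_prop) (by fun_prop)
  have hr : γ {v | v 0 ^ 2 < ε * ‖v‖ ^ 2} ≤
      ENNReal.ofReal (3 * Real.sqrt ((k + 1 : ℕ) * ε)) := by
    rw [hγ, ← map_pi_eq_stdGaussian, Measure.map_apply (by fun_prop) hmeas]
    refine le_trans (le_of_eq ?_) (sfc_pi k ε h0 h1)
    congr 1
    ext x
    simp [EuclideanSpace.real_norm_sq_eq]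
  have hγ0 : ∀ᵐ g ∂γ, g ≠ 0 := by
    rw [ae_iff]
    simp only [not_not, Set.setOf_eq_eq_singleton]
    rw [hγ, ← map_pi_eq_stdGaussian, Measure.map_apply (by fun_prop) (measurableSet_singleton _)]
    have := nullSingletonClass_gaussianReal (μ := 0) (v := 1) one_ne_zero
    have h2 : (WithLp.toLp 2 ⁻¹' {(0 : EuclideanSpace ℝ (Fin (k + 1)))}) = {(0 : Fin (k + 1) → ℝ)} := by
      ext x; simp
    rw [h2]
    exact measure_singleton _
  set A : Set (EuclideanSpace ℝ (Fin (k + 1)) × EuclideanSpace ℝ (Fin (k + 1))) :=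
    {p | (inner ℝ p.1 p.2) ^ 2 < ε * ‖p.1‖ ^ 2 * ‖p.2‖ ^ 2} with hA
  have hAm : MeasurableSet A := measurableSet_lt (by fun_prop) (by fun_prop)
  have e1 : (μ.prod γ) A = γ {v | v 0 ^ 2 < ε * ‖v‖ ^ 2} := by
    rw [Measure.prod_apply hAm]
    have : ∀ᵐ v ∂μ, γ (Prod.mk v ⁻¹' A) = γ {v | v 0 ^ 2 < ε * ‖v‖ ^ 2} := by
      filter_upwards [hsupp] with v hv
      rw [← sfc_rot k γ (fun T => stdGaussian_map T) ε v (by rintro rfl; simp at hv)]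
      congr 1
      ext g
      simp only [hA, Set.mem_preimage, Set.mem_setOf_eq]
      rw [real_inner_comm, mul_right_comm]
    rw [lintegral_congr_ae this]
    simp
  have e2 : (μ.prod γ) A = μ {v | v 0 ^ 2 < ε * ‖v‖ ^ 2} := by
    rw [Measure.prod_apply_symm hAm]
    have : ∀ᵐ g ∂γ, μ ((fun v => (v, g)) ⁻¹' A) = μ {v | v 0 ^ 2 < ε * ‖v‖ ^ 2} := by
      filter_upwards [hγ0] with g hg
      exact sfc_rot k μ hrot ε g hg
    rw [lintegral_congr_ae this]
    simp
  rw [hp, ← e2, e1]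
  exact hr

/-- If `q₀` is drawn uniformly from the unit sphere in `ℝⁿ` (i.e.\ from
the rotation-invariant probability measure supported on the sphere) and
`ε ≥ n⁻¹·e^{−2n}`, then `Pr((e₁ᵀq₀)² < ε) ≤ 3·√(nε)`. -/
theorem sphere_first_coordinate_small_probability
    (n : ℕ) (hn : 0 < n)
    (μ : Measure (EuclideanSpace ℝ (Fin n))) [IsProbabilityMeasure μ]
    (hsupp : μ {v | ‖v‖ = 1} = 1)
    (hrot : ∀ T : EuclideanSpace ℝ (Fin n) ≃ₗᵢ[ℝ] EuclideanSpace ℝ (Fin n),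
      μ.map T = μ)
    (ε : ℝ) (hε : (n : ℝ)⁻¹ * Real.exp (-2 * n) ≤ ε) :
    μ {v | v ⟨0, hn⟩ ^ 2 < ε} ≤ ENNReal.ofReal (3 * Real.sqrt (n * ε)) := by
  have h0 : 0 < ε := lt_of_lt_of_le (by positivity) hε
  obtain ⟨k, rfl⟩ : ∃ k, n = k + 1 := ⟨n - 1, by omega⟩
  by_cases h1 : 9 * ((k + 1 : ℕ) * ε) < 1
  · refine sfc_main k μ ?_ hrot ε h0 h1
    rw [ae_iff]
    exact (prob_compl_eq_zero_iff (measurableSet_eq_fun (by fun_prop) (by fun_prop))).2 hsupp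
  · refine prob_le_one.trans ?_
    rw [ENNReal.one_le_ofReal]
    have : (1 / 3 : ℝ) ≤ Real.sqrt ((k + 1 : ℕ) * ε) := by
      apply Real.le_sqrt_of_sq_le
      linarith
    linarith
end
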